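/- arXiv:1407.6077 — 3 statements merged into one kernel-verified Lean document; each statement's English description precedes it below -/
import Mathlib

section
/- Let c, r ≥ 1, 0 ≤ t ≤ r−1, and n ≥ 1. Then the polynomial s^{[n]}_{(c^{r−1}, c−1)} · s^{[n]}_{(c^t, (c−1)^{r−t−1})} − s^{[n]}_{(c−1)^r} · s^{[n]}_{((c+1)^t, c^{r−t−1})} in x_1,…,x_n is Schur positive. -/
/-- A semistandard Young tableau of shape `(lam 0, lam 1, …, lam (k-1))` (so `lam i` is the
length of the `(i+1)`-st row), with entries in `{a, a+1, …, b}`: rows weakly increase,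
columns strictly increase.  Entries outside the shape are `0`. -/
structure SSYT (k : ℕ) (lam : ℕ → ℤ) (a b : ℕ) where
  entry : ℕ → ℕ → ℕ
  zero_outside : ∀ i j : ℕ, ¬(i < k ∧ (j : ℤ) < lam i) → entry i j = 0
  lower : ∀ i j : ℕ, i < k → (j : ℤ) < lam i → a ≤ entry i j
  upper : ∀ i j : ℕ, i < k → (j : ℤ) < lam i → entry i j ≤ b
  row_weak : ∀ i j₁ j₂ : ℕ, i < k → j₁ ≤ j₂ → (j₂ : ℤ) < lam i → entry i j₁ ≤ entry i j₂
  col_strict : ∀ i₁ i₂ j : ℕ, i₁ < i₂ → i₂ < k → (j : ℤ) < lam i₂ → entry i₁ j < entry i₂ j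

/-- The monomial `Π_i x_i^{m(i,T)}` of a tableau: the product of `x_{T(c)}` over the
cells `c` of the shape. -/
noncomputable def SSYT.weight {k : ℕ} {lam : ℕ → ℤ} {a b : ℕ} (T : SSYT k lam a b) :
    MvPolynomial ℕ ℤ :=
  ∏ i ∈ Finset.range k, ∏ j ∈ Finset.range (lam i).toNat, MvPolynomial.X (T.entry i j)

/-- `(lam 0, …, lam (k-1))` is a partition: weakly decreasing with nonnegative entries. -/
def IsPartitionSeq (k : ℕ) (lam : ℕ → ℤ) : Prop :=
  (∀ i, i + 1 < k → lam (i + 1) ≤ lam i) ∧ (∀ i, i < k → 0 ≤ lam i)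

/-- The Schur polynomial `s^{[a,b]}_lam = Σ_T Π_i x_i^{m(i,T)}`, the sum running over all
semistandard Young tableaux of shape `lam` with entries in `{a,…,b}`; by convention it is
`0` if `lam` is not a partition. -/
noncomputable def schur (k : ℕ) (lam : ℕ → ℤ) (a b : ℕ) : MvPolynomial ℕ ℤ :=
  letI := Classical.dec (IsPartitionSeq k lam)
  if IsPartitionSeq k lam then ∑ᶠ T : SSYT k lam a b, T.weight else 0

/-- A polynomial in `x_1,…,x_n` is Schur positive if it is a finite sum `Σ_α c_α s^{[n]}_α`
over partitions `α` with coefficients `c_α ∈ ℕ` (encoded by a list of shapes, allowing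
repetition). -/
def SchurPositive (n : ℕ) (f : MvPolynomial ℕ ℤ) : Prop :=
  ∃ L : List (ℕ × (ℕ → ℤ)),
    (∀ p ∈ L, IsPartitionSeq p.1 p.2) ∧
    f = (L.map fun p => schur p.1 p.2 1 n).sum

namespace SchurLR

open MvPolynomial Finset

variable {n : ℕ}

/-- number of elements of the column below `v` -/
def cnt (C : Finset (Fin n)) (v : ℕ) : ℕ := (C.filter (fun i => i.val < v)).card

/-- column compatibility -/
def colLe (C' C : Finset (Fin n)) : Prop := ∀ v, cnt C v ≤ cnt C' v

noncomputable def mono (C : Finset (Fin n)) : MvPolynomial (Fin n) ℤ := ∏ i ∈ C, X i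

open Classical in
noncomputable def Q (h : ℕ → ℕ) : ℕ → Finset (Fin n) → MvPolynomial (Fin n) ℤ
  | 0, _ => 1
  | m + 1, C => ∑ C' ∈ (univ : Finset (Finset (Fin n))).filter
      (fun C' => C'.card = h m ∧ colLe C' C), mono C' * Q h m C'

theorem cnt_succ (C : Finset (Fin n)) (p : Fin n) :
    cnt C (p.val + 1) = cnt C p.val + (if p ∈ C then 1 else 0) := by
  unfold cnt
  by_cases hp : p ∈ C
  · rw [if_pos hp]
    have : C.filter (fun i => i.val < p.val + 1) = insert p (C.filter (fun i => i.val < p.val)) := by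
      ext i
      simp only [mem_filter, mem_insert]
      constructor
      · rintro ⟨h1, h2⟩
        rcases Nat.lt_succ_iff_lt_or_eq.1 h2 with h | h
        · exact Or.inr ⟨h1, h⟩
        · exact Or.inl (Fin.ext h)
      · rintro (h | ⟨h1, h2⟩)
        · subst h; exact ⟨hp, by omega⟩
        · exact ⟨h1, by omega⟩
    rw [this, card_insert_of_notMem (by simp)]
  · rw [if_neg hp, add_zero]
    congr 1
    ext i
    simp only [mem_filter]
    constructor
    · rintro ⟨h1, h2⟩
      refine ⟨h1, ?_⟩
      rcases Nat.lt_succ_iff_lt_or_eq.1 h2 with h | h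
      · exact h
      · exact absurd (Fin.ext h ▸ h1) hp
    · rintro ⟨h1, h2⟩
      exact ⟨h1, by omega⟩

/-- swap two neighbours in a column -/
def sw (p q : Fin n) (C : Finset (Fin n)) : Finset (Fin n) := C.map (Equiv.swap p q).toEmbedding

theorem mem_sw (p q i : Fin n) (C : Finset (Fin n)) : i ∈ sw p q C ↔ Equiv.swap p q i ∈ C := by
  unfold sw
  rw [Finset.mem_map_equiv, Equiv.symm_swap]

theorem sw_sw (p q : Fin n) (C : Finset (Fin n)) : sw p q (sw p q C) = C := by
  ext i; simp [mem_sw]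

theorem card_sw (p q : Fin n) (C : Finset (Fin n)) : (sw p q C).card = C.card := by
  simp [sw]

theorem cnt_sw (p q : Fin n) (hpq : q.val = p.val + 1) (C : Finset (Fin n)) (v : ℕ)
    (hv : v ≠ p.val + 1) : cnt (sw p q C) v = cnt C v := by
  unfold cnt sw
  rw [Finset.filter_map, card_map]
  congr 1
  ext i
  simp only [mem_filter, Function.comp, Equiv.coe_toEmbedding]
  refine and_congr_right fun _ => ?_
  by_cases h1 : i = p
  · subst h1; rw [Equiv.swap_apply_left]; omega
  by_cases h2 : i = q
  · subst h2; rw [Equiv.swap_apply_right]; omega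
  rw [Equiv.swap_apply_of_ne_of_ne h1 h2]

theorem sw_eq_self (p q : Fin n) (C : Finset (Fin n)) (h : p ∈ C ↔ q ∈ C) : sw p q C = C := by
  ext i
  rw [mem_sw]
  by_cases h1 : i = p
  · subst h1; rw [Equiv.swap_apply_left]; exact h.symm
  by_cases h2 : i = q
  · subst h2; rw [Equiv.swap_apply_right]; exact h
  rw [Equiv.swap_apply_of_ne_of_ne h1 h2]

theorem rename_mono (p q : Fin n) (C : Finset (Fin n)) :
    rename (Equiv.swap p q) (mono C) = mono (sw p q C) := by
  unfold mono sw
  rw [map_prod, Finset.prod_map]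
  simp

theorem colLe_sw (p q : Fin n) (hpq : q.val = p.val + 1) (C C' : Finset (Fin n))
    (hC : ¬ (p ∈ C ∧ q ∉ C)) (h : colLe C' C) : colLe (sw p q C') C := by
  intro v
  by_cases hv : v = p.val + 1
  · subst hv
    have h0 := h p.val
    have h2 := h (q.val + 1)
    have e1 := cnt_sw p q hpq C' p.val (by omega)
    have e2 := cnt_sw p q hpq C' (q.val + 1) (by omega)
    have a1 := cnt_succ C p
    have a2 := cnt_succ C q
    have b1 := cnt_succ (sw p q C') p
    have b2 := cnt_succ (sw p q C') q
    rw [hpq] at a2 b2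
    rw [hpq] at h2 e2
    by_cases c1 : p ∈ C <;> by_cases c2 : q ∈ C <;> simp only [c1, c2, if_true, if_false] at a1 a2 <;>
      first | (exfalso; exact hC ⟨c1, c2⟩) | skip
    all_goals
      split_ifs at b1 b2 <;> omega
  · rw [cnt_sw p q hpq C' v hv]; exact h v

/-- invariance -/
def Inv (p q : Fin n) (f : MvPolynomial (Fin n) ℤ) : Prop := rename (Equiv.swap p q) f = f

theorem Inv.mul {p q : Fin n} {f g : MvPolynomial (Fin n) ℤ} (hf : Inv p q f) (hg : Inv p q g) :
    Inv p q (f * g) := by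
  unfold Inv at *; rw [map_mul, hf, hg]
theorem Inv.add {p q : Fin n} {f g : MvPolynomial (Fin n) ℤ} (hf : Inv p q f) (hg : Inv p q g) :
    Inv p q (f + g) := by
  unfold Inv at *; rw [map_add, hf, hg]
theorem Inv.sub {p q : Fin n} {f g : MvPolynomial (Fin n) ℤ} (hf : Inv p q f) (hg : Inv p q g) :
    Inv p q (f - g) := by
  unfold Inv at *; rw [map_sub, hf, hg]
theorem Inv.sum {ι : Type*} {p q : Fin n} {s : Finset ι} {f : ι → MvPolynomial (Fin n) ℤ}
    (hf : ∀ i ∈ s, Inv p q (f i)) : Inv p q (∑ i ∈ s, f i) := by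
  unfold Inv at *; rw [map_sum]; exact Finset.sum_congr rfl hf

theorem inv_mono (p q : Fin n) (C : Finset (Fin n)) (h : p ∈ C ↔ q ∈ C) : Inv p q (mono C) := by
  unfold Inv; rw [rename_mono, sw_eq_self p q C h]

theorem mono_erase (q : Fin n) (C : Finset (Fin n)) (h : q ∈ C) :
    mono C = X q * mono (C.erase q) := by
  unfold mono; rw [Finset.mul_prod_erase C _ h]

theorem Q_defect (h : ℕ → ℕ) (p q : Fin n) (hpq : q.val = p.val + 1) (m : ℕ)
    (ih : ∀ C : Finset (Fin n), ¬ (p ∈ C ∧ q ∉ C) → Inv p q (Q h m C))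
    (C : Finset (Fin n)) (hp : p ∈ C) (hq : q ∉ C) :
    ∃ R, Inv p q R ∧ Q h (m + 1) C = Q h (m + 1) (sw p q C) - X q * R := by
  classical
  have hpne : p ≠ q := fun e => by rw [e] at hp; exact hq hp
  have key : ∀ C'' : Finset (Fin n), colLe C'' C → colLe C'' (sw p q C) := by
    intro C'' h1 v
    by_cases hv : v = p.val + 1
    · subst hv
      have b1 := cnt_succ (sw p q C) p
      have : p ∉ sw p q C := by rw [mem_sw, Equiv.swap_apply_left]; exact hq
      rw [if_neg this, cnt_sw p q hpq C p.val (by omega)] at b1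
      have := h1 p.val
      have h3 := cnt_succ C'' p
      omega
    · rw [cnt_sw p q hpq C v hv]; exact h1 v
  have key2 : ∀ C'' : Finset (Fin n), colLe C'' (sw p q C) → ¬ colLe C'' C → p ∉ C'' ∧ q ∈ C'' := by
    intro C'' h1 h2
    have h0 := h1 p.val
    have h3 := h1 (q.val + 1)
    rw [cnt_sw p q hpq C _ (by omega)] at h0 h3
    have a1 := cnt_succ C p
    have a2 := cnt_succ C q
    have b1 := cnt_succ C'' p
    have b2 := cnt_succ C'' q
    rw [if_pos hp] at a1
    rw [if_neg hq] at a2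
    have h4 : ¬ (cnt C (p.val + 1) ≤ cnt C'' (p.val + 1)) := by
      intro h5
      apply h2
      intro v
      by_cases hv : v = p.val + 1
      · rw [hv]; exact h5
      · have := h1 v
        rwa [cnt_sw p q hpq C v hv] at this
    rw [hpq] at a2 b2 h3
    by_cases c1 : p ∈ C'' <;> by_cases c2 : q ∈ C'' <;>
      simp only [c1, c2, if_true, if_false] at b1 b2 <;>
      first | exact ⟨c1, c2⟩ | (exfalso; omega)
  refine ⟨∑ C'' ∈ (univ : Finset (Finset (Fin n))).filter
      (fun C' => (C'.card = h m ∧ colLe C' (sw p q C)) ∧ ¬ (C'.card = h m ∧ colLe C' C)),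
      mono (C''.erase q) * Q h m C'', ?_, ?_⟩
  · refine Inv.sum fun C'' hC'' => ?_
    simp only [mem_filter, mem_univ, true_and] at hC''
    obtain ⟨k1, k2⟩ := key2 C'' hC''.1.2 (fun hh => hC''.2 ⟨hC''.1.1, hh⟩)
    refine Inv.mul (inv_mono _ _ _ ?_) (ih _ (fun hh => k1 hh.1))
    simp [k1]
  · rw [Q, Q, eq_sub_iff_add_eq, Finset.mul_sum]
    rw [← Finset.sum_filter_add_sum_filter_not (univ.filter (fun C' => C'.card = h m ∧ colLe C' (sw p q C)))
      (fun C' => C'.card = h m ∧ colLe C' C)]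
    congr 1
    · refine Finset.sum_congr ?_ fun _ _ => rfl
      ext C''
      simp only [mem_filter, mem_univ, true_and]
      constructor
      · rintro ⟨h1, h2⟩; exact ⟨⟨h1, key _ h2⟩, h1, h2⟩
      · rintro ⟨_, h⟩; exact h
    · rw [Finset.filter_filter]
      refine Finset.sum_congr rfl fun C'' hC'' => ?_
      simp only [mem_filter, mem_univ, true_and] at hC''
      obtain ⟨k1, k2⟩ := key2 C'' hC''.1.2 (fun hh => hC''.2 ⟨hC''.1.1, hh⟩)
      rw [mono_erase q C'' k2, mul_assoc]

theorem Q_step (h : ℕ → ℕ) (p q : Fin n) (hpq : q.val = p.val + 1) (m : ℕ)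
    (ih : ∀ C : Finset (Fin n), ¬ (p ∈ C ∧ q ∉ C) → Inv p q (Q h m C))
    (ihd : ∀ C : Finset (Fin n), p ∈ C → q ∉ C →
      ∃ R, Inv p q R ∧ Q h m C = Q h m (sw p q C) - X q * R)
    (C : Finset (Fin n)) (hC : ¬ (p ∈ C ∧ q ∉ C)) : Inv p q (Q h (m + 1) C) := by
  classical
  have hne : p ≠ q := by intro e; rw [e] at hpq; omega
  have swX : rename (Equiv.swap p q) (X p : MvPolynomial (Fin n) ℤ) = X q := by simp
  have swX' : rename (Equiv.swap p q) (X q : MvPolynomial (Fin n) ℤ) = X p := by simp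
  have pairL : ∀ C' : Finset (Fin n), p ∈ C' → q ∉ C' →
      Inv p q (mono C' * Q h m C' + mono (sw p q C') * Q h m (sw p q C')) := by
    intro C' hp hq
    obtain ⟨R, hR, e⟩ := ihd C' hp hq
    have m1 := mono_erase p C' hp
    have hs := inv_mono p q (C'.erase p) (by simp [hq])
    have m2 : mono (sw p q C') = X q * mono (C'.erase p) := by
      rw [← rename_mono, m1, map_mul, hs, swX]
    have hQ : Inv p q (Q h m (sw p q C')) := ih _ (by
      rw [mem_sw, Equiv.swap_apply_left]; exact fun hh => hq hh.1)
    rw [m2, m1, e]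
    unfold Inv at *
    simp only [map_add, map_mul, map_sub, swX, swX', hs, hQ, hR]
    ring
  have pair : ∀ C' : Finset (Fin n), 
      Inv p q (mono C' * Q h m C' + mono (sw p q C') * Q h m (sw p q C')) := by
    intro C'
    by_cases hp : p ∈ C' <;> by_cases hq : q ∈ C'
    · rw [sw_eq_self p q C' (by tauto)]
      have := Inv.mul (inv_mono p q C' (by tauto)) (ih C' (by tauto))
      exact this.add this
    · exact pairL C' hp hq
    · have := pairL (sw p q C') (by rw [mem_sw, Equiv.swap_apply_left]; exact hq)
        (by rw [mem_sw, Equiv.swap_apply_right]; exact hp)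
      rw [sw_sw, add_comm] at this
      exact this
    · rw [sw_eq_self p q C' (by tauto)]
      have := Inv.mul (inv_mono p q C' (by tauto)) (ih C' (by tauto))
      exact this.add this
  have two : Q h (m + 1) C + Q h (m + 1) C = ∑ C' ∈ (univ : Finset (Finset (Fin n))).filter
      (fun C' => C'.card = h m ∧ colLe C' C), 
      (mono C' * Q h m C' + mono (sw p q C') * Q h m (sw p q C')) := by
    rw [Finset.sum_add_distrib]
    congr 1
    · rw [Q]
      refine Finset.sum_nbij' (sw p q) (sw p q) ?_ ?_ ?_ ?_ ?_
      · intro C' hC'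
        simp only [mem_filter, mem_univ, true_and] at hC' ⊢
        exact ⟨by rw [card_sw]; exact hC'.1, colLe_sw p q hpq C C' hC hC'.2⟩
      · intro C' hC'
        simp only [mem_filter, mem_univ, true_and] at hC' ⊢
        exact ⟨by rw [card_sw]; exact hC'.1, colLe_sw p q hpq C C' hC hC'.2⟩
      · intro C' _; exact sw_sw p q C'
      · intro C' _; exact sw_sw p q C'
      · intro C' _; rw [sw_sw]
  have h2 : Inv p q (Q h (m + 1) C + Q h (m + 1) C) := by
    rw [two]; exact Inv.sum fun C' _ => pair C'
  unfold Inv at *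
  rw [map_add, ← two_mul, ← two_mul] at h2
  exact mul_left_cancel₀ two_ne_zero h2

theorem Q_inv (h : ℕ → ℕ) (p q : Fin n) (hpq : q.val = p.val + 1) (m : ℕ) :
    ∀ C : Finset (Fin n), ¬ (p ∈ C ∧ q ∉ C) → Inv p q (Q h m C) := by
  suffices H : (∀ C : Finset (Fin n), ¬ (p ∈ C ∧ q ∉ C) → Inv p q (Q h m C)) ∧
      (∀ C : Finset (Fin n), p ∈ C → q ∉ C →
      ∃ R, Inv p q R ∧ Q h m C = Q h m (sw p q C) - X q * R) from H.1
  induction m with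
  | zero =>
    refine ⟨fun C _ => by simp [Inv, Q], fun C _ _ => ⟨0, by simp [Inv], by simp [Q]⟩⟩
  | succ m ih =>
    exact ⟨Q_step h p q hpq m ih.1 ih.2, Q_defect h p q hpq m ih.1⟩

/-! ### Alternants -/

noncomputable def Alt (f : MvPolynomial (Fin n) ℤ) : MvPolynomial (Fin n) ℤ :=
  ∑ w : Equiv.Perm (Fin n), ((Equiv.Perm.sign w : ℤ) : MvPolynomial (Fin n) ℤ) * rename w f

noncomputable def xpow (β : Fin n → ℕ) : MvPolynomial (Fin n) ℤ := ∏ i, X i ^ β i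

noncomputable def av (β : Fin n → ℕ) : MvPolynomial (Fin n) ℤ := Alt (xpow β)

theorem Alt_sum {ι : Type*} (s : Finset ι) (f : ι → MvPolynomial (Fin n) ℤ) :
    Alt (∑ i ∈ s, f i) = ∑ i ∈ s, Alt (f i) := by
  unfold Alt
  rw [Finset.sum_comm]
  refine Finset.sum_congr rfl fun w _ => ?_
  rw [map_sum, Finset.mul_sum]

theorem Alt_mul_symm (f g : MvPolynomial (Fin n) ℤ)
    (hg : ∀ w : Equiv.Perm (Fin n), rename w g = g) : Alt (f * g) = Alt f * g := by
  unfold Alt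
  rw [Finset.sum_mul]
  refine Finset.sum_congr rfl fun w _ => ?_
  rw [map_mul, hg, mul_assoc]

theorem Alt_eq_zero (p q : Fin n) (hne : p ≠ q) (f : MvPolynomial (Fin n) ℤ) (hf : Inv p q f) :
    Alt f = 0 := by
  have h : Alt f = - Alt f := by
    conv_lhs => rw [Alt]
    rw [Alt, ← Finset.sum_neg_distrib]
    refine Fintype.sum_equiv (Equiv.mulRight (Equiv.swap p q)) _ _ fun w => ?_
    simp only [Equiv.coe_mulRight, Equiv.Perm.sign_mul, Equiv.Perm.sign_swap hne]
    have : rename (⇑(w * Equiv.swap p q)) f = rename w f := by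
      conv_rhs => rw [← hf]
      rw [rename_rename]; rfl
    rw [this]
    push_cast
    ring
  have h2 : (2 : MvPolynomial (Fin n) ℤ) * Alt f = 0 := by
    rw [two_mul]; nth_rewrite 1 [h]; simp
  exact (mul_eq_zero.1 h2).resolve_left two_ne_zero

/-- add a column -/
def addC (β : Fin n → ℕ) (C : Finset (Fin n)) : Fin n → ℕ := fun i => β i + if i ∈ C then 1 else 0

theorem xpow_addC (β : Fin n → ℕ) (C : Finset (Fin n)) : xpow β * mono C = xpow (addC β C) := by
  unfold xpow mono addC
  simp only [pow_add, Finset.prod_mul_distrib]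
  congr 1
  simp [Finset.prod_ite_mem, pow_ite]

theorem inv_xpow (p q : Fin n) (β : Fin n → ℕ) (h : β p = β q) : Inv p q (xpow β) := by
  unfold Inv xpow
  rw [map_prod]
  refine Fintype.prod_equiv (Equiv.swap p q) _ _ fun i => ?_
  rw [map_pow, rename_X]
  congr 1
  by_cases h1 : i = p
  · subst h1; rw [Equiv.swap_apply_left]; exact h
  by_cases h2 : i = q
  · subst h2; rw [Equiv.swap_apply_right]; exact h.symm
  rw [Equiv.swap_apply_of_ne_of_ne h1 h2]

theorem strictAnti_of_adj (β : Fin n → ℕ) (h : ∀ p q : Fin n, q.val = p.val + 1 → β q < β p) :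
    StrictAnti β := by
  have key : ∀ d : ℕ, ∀ p q : Fin n, q.val = p.val + 1 + d → β q < β p := by
    intro d
    induction d with
    | zero => exact h
    | succ d ih =>
      intro p q hpq
      have hq := q.2
      have h1 := ih p ⟨q.val - 1, by omega⟩ (by simp; omega)
      have h2 := h ⟨q.val - 1, by omega⟩ q (by simp; omega)
      omega
  intro p q hpq
  have : p.val < q.val := hpq
  exact key (q.val - p.val - 1) p q (by omega)

theorem Alt_vanish (h : ℕ → ℕ) (m : ℕ) (β : Fin n → ℕ) (hβ : StrictAnti β) (C : Finset (Fin n))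
    (hC : ¬ StrictAnti (addC β C)) : Alt (xpow (addC β C) * Q h m C) = 0 := by
  by_contra hne
  apply hC
  apply strictAnti_of_adj
  intro p q hpq
  by_contra hlt
  apply hne
  have hlt' : p < q := by rw [Fin.lt_def]; omega
  have h1 := hβ hlt'
  have h3 : addC β C p ≤ addC β C q := not_lt.1 hlt
  have h4 := h3
  unfold addC at h4
  have hp : p ∉ C := by
    intro hp; rw [if_pos hp] at h4; split_ifs at h4 <;> omega
  have h5 : addC β C p = addC β C q := by
    unfold addC
    rw [if_neg hp] at h4 ⊢; split_ifs at h4 ⊢ <;> omega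
  exact Alt_eq_zero p q hlt'.ne _ ((inv_xpow p q _ h5).mul (Q_inv h p q hpq m C (fun hh => hp hh.1)))

/-- nonnegative combinations of alternants -/
noncomputable def PosAlt (n : ℕ) : AddSubmonoid (MvPolynomial (Fin n) ℤ) :=
  AddSubmonoid.closure {f | ∃ β : Fin n → ℕ, StrictAnti β ∧ f = av β}

open Classical in
theorem Alt_Q_succ (h : ℕ → ℕ) (m : ℕ) (β : Fin n → ℕ) (C : Finset (Fin n)) :
    Alt (xpow β * Q h (m + 1) C) = ∑ C' ∈ (univ : Finset (Finset (Fin n))).filter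
      (fun C' => C'.card = h m ∧ colLe C' C), Alt (xpow (addC β C') * Q h m C') := by
  rw [Q, Finset.mul_sum, Alt_sum]
  refine Finset.sum_congr ?_ fun C' _ => ?_
  · ext; simp
  · rw [← mul_assoc, xpow_addC]

theorem Alt_Q_pos (h : ℕ → ℕ) (m : ℕ) : ∀ (β : Fin n → ℕ), StrictAnti β → ∀ (C : Finset (Fin n)),
    Alt (xpow β * Q h m C) ∈ PosAlt n := by
  induction m with
  | zero =>
    intro β hβ C
    rw [Q, mul_one]
    exact AddSubmonoid.subset_closure ⟨β, hβ, rfl⟩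
  | succ m ih =>
    intro β hβ C
    rw [Alt_Q_succ]
    refine sum_mem fun C' _ => ?_
    by_cases hs : StrictAnti (addC β C')
    · exact ih _ hs C'
    · rw [Alt_vanish h m β hβ C' hs]; exact zero_mem _

theorem Q_symm (h : ℕ → ℕ) (m : ℕ) (w : Equiv.Perm (Fin n)) :
    rename w (Q h m (∅ : Finset (Fin n))) = Q h m ∅ := by
  cases n with
  | zero =>
    have : w = 1 := Subsingleton.elim _ _
    subst this
    simp
  | succ n =>
    have hw : w ∈ Submonoid.closure
        (Set.range fun i : Fin n ↦ Equiv.swap i.castSucc i.succ) := by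
      rw [Equiv.Perm.mclosure_swap_castSucc_succ]; trivial
    induction hw using Submonoid.closure_induction with
    | mem x hx =>
      obtain ⟨i, rfl⟩ := hx
      exact Q_inv h i.castSucc i.succ (by simp) m ∅ (by simp)
    | one => simp
    | mul x y _ _ hx hy =>
      have : rename (⇑(x * y)) (Q h m (∅ : Finset (Fin (n+1)))) = rename x (rename y (Q h m ∅)) := by
        rw [rename_rename]; rfl
      rw [this, hy, hx]

theorem av_mul_Q (h : ℕ → ℕ) (m : ℕ) (β : Fin n → ℕ) :
    av β * Q h m ∅ = Alt (xpow β * Q h m ∅) :=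
  (Alt_mul_symm _ _ (Q_symm h m)).symm

def initC (n k : ℕ) : Finset (Fin n) := univ.filter (fun i => i.val < k)

theorem mem_initC (k : ℕ) (i : Fin n) : i ∈ initC n k ↔ i.val < k := by simp [initC]

theorem card_initC (k : ℕ) (hk : k ≤ n) : (initC n k).card = k := by
  unfold initC
  rw [Fin.card_filter_val_lt]
  omega

theorem lower_eq_initC (C : Finset (Fin n)) (h : ∀ p q : Fin n, q ∈ C → p.val < q.val → p ∈ C) :
    C = initC n C.card := by
  have hsub : ∀ q ∈ C, q.val < C.card := by
    intro q hq
    have h1 : initC n (q.val + 1) ⊆ C := by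
      intro p hp
      rw [mem_initC] at hp
      by_cases e : p = q
      · rw [e]; exact hq
      · exact h p q hq (by have : p.val ≠ q.val := fun hh => e (Fin.ext hh); omega)
    have := card_le_card h1
    rw [card_initC _ (by omega)] at this
    omega
  have hc : C.card ≤ n := by simpa using card_le_univ C
  refine eq_of_subset_of_card_le (fun q hq => ?_) ?_
  · rw [mem_initC]; exact hsub q hq
  · rw [card_initC _ hc]

theorem lower_of_adj (C : Finset (Fin n)) (h : ∀ p q : Fin n, q.val = p.val + 1 → q ∈ C → p ∈ C) :
    ∀ p q : Fin n, q ∈ C → p.val < q.val → p ∈ C := by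
  have key : ∀ d : ℕ, ∀ p q : Fin n, q.val = p.val + 1 + d → q ∈ C → p ∈ C := by
    intro d
    induction d with
    | zero => exact h
    | succ d ih =>
      intro p q hpq hq
      have hq' := q.2
      exact ih p ⟨q.val - 1, by omega⟩ (by simp; omega) (h ⟨q.val - 1, by omega⟩ q (by simp; omega) hq)
  intro p q hq hpq
  exact key (q.val - p.val - 1) p q (by omega) hq

theorem initC_subset_of_colLe (C : Finset (Fin n)) (k : ℕ) (hk : k ≤ n) (h : colLe C (initC n k)) :
    initC n k ⊆ C := by
  have h1 := h k
  unfold cnt at h1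
  have e : (initC n k).filter (fun i => i.val < k) = initC n k := by
    unfold initC; rw [Finset.filter_filter]; simp
  rw [e] at h1
  have h2 : C.filter (fun i => i.val < k) ⊆ initC n k := by
    intro i hi; rw [mem_filter] at hi; rw [mem_initC]; exact hi.2
  have := eq_of_subset_of_card_le h2 h1
  rw [← this]
  exact filter_subset _ _

theorem Alt_Q_init (h : ℕ → ℕ) (hanti : Antitone h) (hn : ∀ j, h j ≤ n) (m : ℕ) :
    ∀ (β : Fin n → ℕ) (k : ℕ), StrictAnti β → k ≤ n → (∀ j < m, k ≤ h j) →
      (∀ i : Fin n, k ≤ i.val → β i = n - 1 - i.val) →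
      Alt (xpow β * Q h m (initC n k)) =
        av (fun i => β i + ((range m).filter (fun j => i.val < h j)).card) := by
  induction m with
  | zero =>
    intro β k hβ hk _ _
    simp [Q, av]
  | succ m ih =>
    intro β k hβ hk hh hz
    rw [Alt_Q_succ]
    have hcol : colLe (initC n (h m)) (initC n k) := by
      intro v
      unfold cnt
      refine card_le_card (filter_subset_filter _ ?_)
      intro i hi
      rw [mem_initC] at hi ⊢
      have := hh m (by omega)
      omega
    have hsa : StrictAnti (addC β (initC n (h m))) := by
      intro p q hpq
      have := hβ hpq
      have hpq' : p.val < q.val := hpq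
      unfold addC
      simp only [mem_initC]
      split_ifs <;> omega
    rw [Finset.sum_eq_single (initC n (h m))]
    · rw [ih _ (h m) hsa (hn m) (fun j hj => hanti hj.le)]
      · congr 1
        funext i
        unfold addC
        simp only [mem_initC]
        rw [Finset.range_add_one, Finset.filter_insert]
        split_ifs with h1
        · rw [card_insert_of_notMem (by simp)]; omega
        · omega
      · intro i hi
        unfold addC
        simp only [mem_initC]
        rw [if_neg (by omega), add_zero]
        exact hz i (le_trans (hh m (by omega)) hi)
    · intro C' hC' hne
      simp only [mem_filter, mem_univ, true_and] at hC'
      apply Alt_vanish h m β hβ C'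
      intro hs
      apply hne
      have hsub := initC_subset_of_colLe C' k hk hC'.2
      rw [← hC'.1]
      apply lower_eq_initC
      apply lower_of_adj
      intro p q hpq hq
      by_contra hp
      have hkp : k ≤ p.val := by
        by_contra hkp
        exact hp (hsub (by rw [mem_initC]; omega))
      have h1 := hs (show p < q by rw [Fin.lt_def]; omega)
      unfold addC at h1
      rw [if_pos hq, if_neg hp, hz p hkp, hz q (by omega)] at h1
      have := q.2
      omega
    · intro hnot
      exfalso
      apply hnot
      simp only [mem_filter, mem_univ, true_and]
      exact ⟨card_initC _ (hn m), hcol⟩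

def rho (n : ℕ) : Fin n → ℕ := fun i => n - 1 - i.val

theorem rho_anti : StrictAnti (rho n) := by
  intro p q hpq
  have : p.val < q.val := hpq
  have := q.2
  unfold rho
  omega

/-- bialternant formula -/
theorem av_rho_mul_Q (h : ℕ → ℕ) (hanti : Antitone h) (hn : ∀ j, h j ≤ n) (m : ℕ) :
    av (rho n) * Q h m ∅ =
      av (fun i => rho n i + ((range m).filter (fun j => i.val < h j)).card) := by
  rw [av_mul_Q]
  have := Alt_Q_init h hanti hn m (rho n) 0 rho_anti (Nat.zero_le _) (fun _ _ => Nat.zero_le _)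
    (fun i _ => rfl)
  have e : initC n 0 = ∅ := by ext i; simp [mem_initC]
  rwa [e] at this

theorem av_eq_det (β : Fin n → ℕ) :
    av β = Matrix.det (Matrix.of fun i j : Fin n => (X j : MvPolynomial (Fin n) ℤ) ^ β i) := by
  rw [← Matrix.det_transpose, Matrix.det_apply']
  unfold av Alt xpow
  refine Finset.sum_congr rfl fun w _ => ?_
  simp [map_prod]

theorem av_rho_ne_zero : av (rho n) ≠ 0 := by
  have h := (Matrix.det_vandermonde_ne_zero_iff
    (v := fun i : Fin n => (X i : MvPolynomial (Fin n) ℤ))).2 X_injective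
  rw [av_eq_det]
  intro h0
  apply h
  rw [← Matrix.det_transpose]
  have : (Matrix.vandermonde fun i : Fin n => (X i : MvPolynomial (Fin n) ℤ)).transpose =
    (Matrix.of fun i j : Fin n => (X j : MvPolynomial (Fin n) ℤ) ^ rho n i).submatrix Fin.revPerm id := by
    ext i j
    simp [Matrix.vandermonde, rho]
    congr 2
    omega
  rw [this, Matrix.det_permute, h0, mul_zero]

theorem av_shift (β : Fin n → ℕ) : av (fun i => β i + 1) = mono univ * av β := by
  have : xpow (fun i => β i + 1) = xpow β * mono univ := by
    rw [xpow_addC]; unfold addC; simp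
  unfold av
  rw [this, Alt_mul_symm, mul_comm]
  intro w
  unfold mono
  rw [map_prod]
  exact Fintype.prod_equiv w _ _ (fun i => by simp)

theorem mono_ne_zero (C : Finset (Fin n)) : mono C ≠ 0 := by
  unfold mono
  exact Finset.prod_ne_zero_iff.2 fun i _ => X_ne_zero i

/-! ### From columns to tableaux -/

def Cond (h : ℕ → ℕ) (m : ℕ) (C : Finset (Fin n)) (F : Fin m → Finset (Fin n)) : Prop :=
  (∀ j, (F j).card = h j.val) ∧ (∀ j j' : Fin m, j < j' → colLe (F j) (F j')) ∧
    ∀ j, colLe (F j) C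

theorem cond_snoc (h : ℕ → ℕ) (m : ℕ) (C C' : Finset (Fin n)) (F : Fin m → Finset (Fin n)) :
    Cond h (m + 1) C (Fin.snoc (α := fun _ => Finset (Fin n)) F C') ↔
      (C'.card = h m ∧ colLe C' C) ∧ Cond h m C' F := by
  unfold Cond
  constructor
  · rintro ⟨h1, h2, h3⟩
    refine ⟨⟨by simpa using h1 (Fin.last m), by simpa using h3 (Fin.last m)⟩, ?_, ?_, ?_⟩
    · intro j; simpa using h1 j.castSucc
    · intro j j' hj; simpa using h2 j.castSucc j'.castSucc (by simpa using hj)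
    · intro j; simpa using h2 j.castSucc (Fin.last m) (Fin.castSucc_lt_last j)
  · rintro ⟨⟨h1, h2⟩, h3, h4, h5⟩
    refine ⟨?_, ?_, ?_⟩
    · intro j
      induction j using Fin.lastCases with
      | last => simpa using h1
      | cast j => simpa using h3 j
    · intro j j' hj
      induction j' using Fin.lastCases with
      | last =>
        induction j using Fin.lastCases with
        | last => exact absurd hj (lt_irrefl _)
        | cast j => simpa using h5 j
      | cast j' =>
        induction j using Fin.lastCases with
        | last => exact absurd hj (not_lt.2 (Fin.le_last _))
        | cast j => simpa using h4 j j' (by simpa using hj)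
    · intro j
      induction j using Fin.lastCases with
      | last => simpa using h2
      | cast j =>
        simp only [Fin.snoc_castSucc]
        exact fun v => (h2 v).trans (h5 j v)

open Classical in
theorem Q_eq_sum (h : ℕ → ℕ) (m : ℕ) : ∀ C : Finset (Fin n),
    Q h m C = ∑ F : Fin m → Finset (Fin n), if Cond h m C F then ∏ j, mono (F j) else 0 := by
  induction m with
  | zero =>
    intro C
    have : ∀ F : Fin 0 → Finset (Fin n), Cond h 0 C F := fun F =>
      ⟨fun j => j.elim0, fun j => j.elim0, fun j => j.elim0⟩
    simp [Q, this]
  | succ m ih =>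
    intro C
    rw [Q, Finset.sum_filter]
    rw [← (Fin.snocEquiv (fun _ : Fin (m+1) => Finset (Fin n))).sum_comp, Fintype.sum_prod_type]
    refine Finset.sum_congr rfl fun C' _ => ?_
    have e : ∀ F : Fin m → Finset (Fin n),
      (Fin.snocEquiv (fun _ : Fin (m+1) => Finset (Fin n))) (C', F) =
        Fin.snoc (α := fun _ => Finset (Fin n)) F C' := fun F => rfl
    simp only [e, cond_snoc]
    by_cases hc : C'.card = h m ∧ colLe C' C
    · rw [if_pos hc, ih C', Finset.mul_sum]
      refine Finset.sum_congr rfl fun F _ => ?_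
      simp only [hc, true_and]
      split_ifs with hF
      · rw [Fin.prod_univ_castSucc]
        simp [mul_comm]
      · simp
    · rw [if_neg hc]
      simp [hc]

theorem emb_lt_iff (C : Finset (Fin n)) {k : ℕ} (hk : C.card = k) (i : Fin k) (v : ℕ) :
    (C.orderEmbOfFin hk i).val < v ↔ i.val < cnt C v := by
  have h1 : C = (univ : Finset (Fin k)).map (C.orderEmbOfFin hk).toEmbedding := by
    rw [Finset.map_orderEmbOfFin_univ]
  have h2 : cnt C v = ((univ : Finset (Fin k)).filter
      (fun i => (C.orderEmbOfFin hk i).val < v)).card := by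
    unfold cnt
    conv_lhs => rw [h1]
    rw [Finset.filter_map, card_map]
    rfl
  have h3 := lower_eq_initC ((univ : Finset (Fin k)).filter
      (fun i => (C.orderEmbOfFin hk i).val < v)) (by
    intro p q hq hpq
    simp only [mem_filter, mem_univ, true_and] at hq ⊢
    have : C.orderEmbOfFin hk p < C.orderEmbOfFin hk q :=
      (C.orderEmbOfFin hk).strictMono hpq
    have : (C.orderEmbOfFin hk p).val < (C.orderEmbOfFin hk q).val := this
    omega)
  rw [h2, ← mem_initC (n := k), ← h3]
  simp

theorem cnt_le_card (C : Finset (Fin n)) (v : ℕ) : cnt C v ≤ C.card := card_filter_le _ _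

theorem colLe_iff (C' C : Finset (Fin n)) {k' k : ℕ} (hk' : C'.card = k') (hk : C.card = k)
    (hkk : k ≤ k') : colLe C' C ↔
      ∀ i : ℕ, ∀ hi : i < k, (C'.orderEmbOfFin hk' ⟨i, hi.trans_le hkk⟩).val ≤
        (C.orderEmbOfFin hk ⟨i, hi⟩).val := by
  constructor
  · intro h i hi
    have h1 := (emb_lt_iff C hk ⟨i, hi⟩ ((C.orderEmbOfFin hk ⟨i, hi⟩).val + 1)).1 (by omega)
    have h2 := (emb_lt_iff C' hk' ⟨i, hi.trans_le hkk⟩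
      ((C.orderEmbOfFin hk ⟨i, hi⟩).val + 1)).2 (lt_of_lt_of_le h1 (h _))
    omega
  · intro h v
    by_contra hlt
    push Not at hlt
    have hi : cnt C' v < k := lt_of_lt_of_le hlt ((cnt_le_card C v).trans hk.le)
    have h1 := (emb_lt_iff C hk ⟨cnt C' v, hi⟩ v).2 hlt
    have h2 := (emb_lt_iff C' hk' ⟨cnt C' v, hi.trans_le hkk⟩ v).1 (lt_of_le_of_lt (h _ hi) h1)
    simp at h2

/-- heights describe the shape -/
structure Heights (k : ℕ) (lam : ℕ → ℤ) (h : ℕ → ℕ) (m : ℕ) : Prop where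
  iff : ∀ i j : ℕ, i < h j ↔ (i < k ∧ (j : ℤ) < lam i)
  zero : ∀ j, m ≤ j → h j = 0

theorem Heights.anti {k : ℕ} {lam : ℕ → ℤ} {h : ℕ → ℕ} {m : ℕ} (H : Heights k lam h m) :
    Antitone h := by
  intro a b hab
  by_contra hlt
  push Not at hlt
  have h1 := (H.iff (h a) b).1 hlt
  have h2 := (H.iff (h a) a).2 ⟨h1.1, by have : (a : ℤ) ≤ b := by exact_mod_cast hab
                                         omega⟩
  omega

theorem Heights.lt_m {k : ℕ} {lam : ℕ → ℤ} {h : ℕ → ℕ} {m : ℕ} (H : Heights k lam h m)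
    {i j : ℕ} (hi : i < h j) : j < m := by
  by_contra hj
  rw [H.zero j (by omega)] at hi
  omega

/-- the tableau of a family of columns -/
noncomputable def toSSYT {k : ℕ} {lam : ℕ → ℤ} {h : ℕ → ℕ} {m : ℕ} (H : Heights k lam h m)
    (F : Fin m → Finset (Fin n)) (hF : Cond h m ∅ F) : SSYT k lam 1 n where
  entry i j := if hi : i < h j then
      (((F ⟨j, H.lt_m hi⟩).orderEmbOfFin (hF.1 ⟨j, H.lt_m hi⟩) ⟨i, hi⟩).val + 1) else 0
  zero_outside i j hij := by
    rw [← H.iff] at hij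
    rw [dif_neg hij]
  lower i j hi hj := by
    have := (H.iff i j).2 ⟨hi, hj⟩
    rw [dif_pos this]; omega
  upper i j hi hj := by
    have := (H.iff i j).2 ⟨hi, hj⟩
    rw [dif_pos this]
    have := ((F ⟨j, H.lt_m this⟩).orderEmbOfFin (hF.1 ⟨j, H.lt_m this⟩) ⟨i, this⟩).2
    omega
  row_weak i j₁ j₂ hi hj hj2 := by
    have h2 := (H.iff i j₂).2 ⟨hi, hj2⟩
    have h12 : h j₂ ≤ h j₁ := H.anti hj
    have h1 : i < h j₁ := lt_of_lt_of_le h2 h12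
    rw [dif_pos h1, dif_pos h2]
    rcases hj.eq_or_lt with rfl | hlt
    · exact le_refl _
    · have := (colLe_iff _ _ (hF.1 ⟨j₁, H.lt_m h1⟩) (hF.1 ⟨j₂, H.lt_m h2⟩) h12).1
        (hF.2.1 ⟨j₁, H.lt_m h1⟩ ⟨j₂, H.lt_m h2⟩ hlt) i h2
      omega
  col_strict i₁ i₂ j hi hk hj := by
    have h2 := (H.iff i₂ j).2 ⟨hk, hj⟩
    have h1 : i₁ < h j := by omega
    rw [dif_pos h1, dif_pos h2]
    have : (F ⟨j, H.lt_m h1⟩).orderEmbOfFin (hF.1 ⟨j, H.lt_m h1⟩) ⟨i₁, h1⟩ <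
      (F ⟨j, H.lt_m h1⟩).orderEmbOfFin (hF.1 ⟨j, H.lt_m h1⟩) ⟨i₂, h2⟩ :=
        OrderEmbedding.strictMono _ hi
    have : ((F ⟨j, H.lt_m h1⟩).orderEmbOfFin (hF.1 ⟨j, H.lt_m h1⟩) ⟨i₁, h1⟩).val <
      ((F ⟨j, H.lt_m h1⟩).orderEmbOfFin (hF.1 ⟨j, H.lt_m h1⟩) ⟨i₂, h2⟩).val := this
    omega

theorem ssyt_ext {k : ℕ} {lam : ℕ → ℤ} {a b : ℕ} (T T' : SSYT k lam a b)
    (h : T.entry = T'.entry) : T = T' := by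
  cases T; cases T'; cases h; rfl

theorem toSSYT_entry {k : ℕ} {lam : ℕ → ℤ} {h : ℕ → ℕ} {m : ℕ} (H : Heights k lam h m)
    (F : Fin m → Finset (Fin n)) (hF : Cond h m ∅ F) (j : Fin m) (i : Fin (h j.val)) :
    (toSSYT H F hF).entry i.val j.val = ((F j).orderEmbOfFin (hF.1 j) i).val + 1 := by
  show (if hi : _ then _ else _) = _
  rw [dif_pos i.2]

theorem toSSYT_bij {k : ℕ} {lam : ℕ → ℤ} {h : ℕ → ℕ} {m : ℕ} (H : Heights k lam h m) :
    Function.Bijective (fun F : {F : Fin m → Finset (Fin n) // Cond h m ∅ F} =>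
      toSSYT H F.1 F.2) := by
  constructor
  · rintro ⟨F, hF⟩ ⟨G, hG⟩ he
    simp only at he
    apply Subtype.ext
    funext j
    show F j = G j
    have e : (F j).orderEmbOfFin (hF.1 j) = (G j).orderEmbOfFin (hG.1 j) := by
      ext i
      have h1 := toSSYT_entry H F hF j i
      rw [he, toSSYT_entry H G hG j i] at h1
      omega
    rw [← Finset.map_orderEmbOfFin_univ (F j) (hF.1 j), e, Finset.map_orderEmbOfFin_univ]
  · intro T
    have hb : ∀ i j, i < h j → T.entry i j - 1 < n := by
      intro i j hi
      obtain ⟨h1, h2⟩ := (H.iff i j).1 hi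
      have := T.lower i j h1 h2
      have := T.upper i j h1 h2
      omega
    let f : ∀ j : Fin m, Fin (h j.val) → Fin n := fun j i => ⟨T.entry i.val j.val - 1, hb _ _ i.2⟩
    have hf : ∀ j, StrictMono (f j) := by
      intro j i₁ i₂ hlt
      obtain ⟨h1, h2⟩ := (H.iff i₁ j).1 i₁.2
      obtain ⟨h3, h4⟩ := (H.iff i₂ j).1 i₂.2
      have := T.lower _ _ h1 h2
      have := T.col_strict _ _ _ hlt h3 h4
      show T.entry i₁.val j.val - 1 < T.entry i₂.val j.val - 1
      omega
    let F : Fin m → Finset (Fin n) := fun j => univ.map ⟨f j, (hf j).injective⟩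
    have hcard : ∀ j, (F j).card = h j.val := by intro j; simp [F]
    have hemb : ∀ j, f j = (F j).orderEmbOfFin (hcard j) := fun j =>
      Finset.orderEmbOfFin_unique (hcard j) (fun i => by simp [F]) (hf j)
    have hC : Cond h m ∅ F := by
      refine ⟨hcard, ?_, ?_⟩
      · intro j j' hj
        rw [colLe_iff _ _ (hcard j) (hcard j') (H.anti (show j.val ≤ j'.val from le_of_lt hj))]
        intro i hi
        rw [← hemb, ← hemb]
        obtain ⟨h1, h2⟩ := (H.iff i j').1 hi
        have := T.row_weak i j j' h1 (le_of_lt hj) h2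
        show T.entry i j.val - 1 ≤ T.entry i j'.val - 1
        omega
      · intro j v
        simp [cnt]
    refine ⟨⟨F, hC⟩, ?_⟩
    apply ssyt_ext
    funext i j
    by_cases hi : i < h j
    · have := toSSYT_entry H F hC ⟨j, H.lt_m hi⟩ ⟨i, hi⟩
      simp only at this ⊢
      rw [this, ← hemb]
      show T.entry i j - 1 + 1 = _
      obtain ⟨h1, h2⟩ := (H.iff i j).1 hi
      have := T.lower i j h1 h2
      omega
    · rw [H.iff] at hi
      rw [T.zero_outside i j hi, (toSSYT H F hC).zero_outside i j hi]

noncomputable def emb (n : ℕ) : MvPolynomial (Fin n) ℤ →ₐ[ℤ] MvPolynomial ℕ ℤ :=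
  rename (fun i : Fin n => i.val + 1)

theorem weight_toSSYT {k : ℕ} {lam : ℕ → ℤ} {h : ℕ → ℕ} {m : ℕ} (H : Heights k lam h m)
    (F : Fin m → Finset (Fin n)) (hF : Cond h m ∅ F) :
    (toSSYT H F hF).weight = emb n (∏ j, mono (F j)) := by
  unfold SSYT.weight
  rw [Finset.prod_comm' (t' := range m) (s' := fun j => range (h j))]
  · rw [map_prod, ← Fin.prod_univ_eq_prod_range
      (fun j => ∏ i ∈ range (h j), X ((toSSYT H F hF).entry i j)) m]
    refine Finset.prod_congr rfl fun j _ => ?_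
    rw [← Fin.prod_univ_eq_prod_range (fun i => (X ((toSSYT H F hF).entry i j.val) : MvPolynomial ℕ ℤ))]
    simp only [toSSYT_entry]
    unfold mono emb
    conv_rhs => rw [← Finset.map_orderEmbOfFin_univ (F j) (hF.1 j)]
    rw [map_prod, Finset.prod_map]
    simp
  · intro i j
    simp only [mem_range]
    constructor
    · rintro ⟨h1, h2⟩
      have := (H.iff i j).2 ⟨h1, by omega⟩
      exact ⟨this, H.lt_m this⟩
    · rintro ⟨h1, _⟩
      obtain ⟨h2, h3⟩ := (H.iff i j).1 h1
      exact ⟨h2, by omega⟩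

theorem schur_eq_Q {k : ℕ} {lam : ℕ → ℤ} {h : ℕ → ℕ} {m : ℕ} (H : Heights k lam h m)
    (hp : IsPartitionSeq k lam) : schur k lam 1 n = emb n (Q h m ∅) := by
  classical
  unfold schur
  have e1 : ∑ᶠ F : {F : Fin m → Finset (Fin n) // Cond h m ∅ F}, emb n (∏ j, mono (F.1 j)) =
      ∑ᶠ T : SSYT k lam 1 n, T.weight := by
    refine finsum_eq_of_bijective _ (toSSYT_bij (n := n) H) ?_
    intro F
    exact (weight_toSSYT H F.1 F.2).symm
  rw [if_pos hp, ← e1, finsum_eq_sum_of_fintype, Q_eq_sum, ← map_sum]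
  congr 1
  rw [← Finset.sum_filter]
  symm
  refine Finset.sum_subtype _ (fun F => ?_) (fun F : Fin m → Finset (Fin n) => ∏ j, mono (F j))
  simp

theorem partition_le {k : ℕ} {lam : ℕ → ℤ} (hp : IsPartitionSeq k lam) :
    ∀ i' i : ℕ, i ≤ i' → i' < k → lam i' ≤ lam i := by
  intro i'
  induction i' with
  | zero => intro i hi _; rw [Nat.le_zero.1 hi]
  | succ i' ih =>
    intro i hi hk
    rcases hi.eq_or_lt with rfl | hlt
    · exact le_refl _
    · exact (hp.1 i' hk).trans (ih i (by omega) (by omega))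

theorem exists_heights {k : ℕ} {lam : ℕ → ℤ} (hp : IsPartitionSeq k lam) :
    ∃ h m, Heights k lam h m := by
  classical
  refine ⟨fun j => ((range k).filter (fun i => (j : ℤ) < lam i)).card, (lam 0).toNat, ?_, ?_⟩
  · intro i j
    have hlow : ∀ p q : Fin k, q ∈ (univ : Finset (Fin k)).filter (fun i => (j : ℤ) < lam i.val) →
        p.val < q.val → p ∈ (univ : Finset (Fin k)).filter (fun i => (j : ℤ) < lam i.val) := by
      intro p q hq hpq
      simp only [mem_filter, mem_univ, true_and] at hq ⊢
      exact lt_of_lt_of_le hq (partition_le hp q p hpq.le q.2)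
    have h1 := lower_eq_initC _ hlow
    have h2 : ((univ : Finset (Fin k)).filter (fun i => (j : ℤ) < lam i.val)).card =
        ((range k).filter (fun i => (j : ℤ) < lam i)).card := by
      rw [card_filter, card_filter, Fin.sum_univ_eq_sum_range (fun i => if (j : ℤ) < lam i then 1 else 0)]
    show i < ((range k).filter (fun i => (j : ℤ) < lam i)).card ↔ _
    rw [← h2]
    constructor
    · intro hi
      have hk : i < k := lt_of_lt_of_le hi (by simpa using card_le_univ (univ.filter (fun i : Fin k => (j : ℤ) < lam i.val)))
      refine ⟨hk, ?_⟩
      have : (⟨i, hk⟩ : Fin k) ∈ initC k ((univ : Finset (Fin k)).filter (fun i => (j : ℤ) < lam i.val)).card := by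
        rw [mem_initC]; exact hi
      rw [← h1] at this
      simpa using this
    · rintro ⟨hk, hj⟩
      have : (⟨i, hk⟩ : Fin k) ∈ (univ : Finset (Fin k)).filter (fun i => (j : ℤ) < lam i.val) := by
        simpa using hj
      rw [h1, mem_initC] at this
      exact this
  · intro j hj
    rw [card_eq_zero, filter_eq_empty_iff]
    intro i hi
    rw [mem_range] at hi
    have := partition_le hp i 0 (Nat.zero_le _) hi
    omega

/-- the exponent of the alternant of a shape -/
def shp (n k : ℕ) (lam : ℕ → ℤ) : Fin n → ℕ := fun i =>
  rho n i + if i.val < k then (lam i.val).toNat else 0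

theorem schur_facts {k : ℕ} {lam : ℕ → ℤ} (hp : IsPartitionSeq k lam)
    (hz : ∀ i, n ≤ i → i < k → lam i = 0) :
    ∃ g : MvPolynomial (Fin n) ℤ, schur k lam 1 n = emb n g ∧ av (rho n) * g = av (shp n k lam) ∧
      ∀ β : Fin n → ℕ, StrictAnti β → av β * g ∈ PosAlt n := by
  obtain ⟨h, m, H⟩ := exists_heights hp
  refine ⟨Q h m ∅, schur_eq_Q H hp, ?_, ?_⟩
  · rw [av_rho_mul_Q h H.anti]
    · congr 1
      funext i
      unfold shp
      congr 1
      have : (range m).filter (fun j => i.val < h j) =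
          range (if i.val < k then (lam i.val).toNat else 0) := by
        ext j
        simp only [mem_filter, mem_range]
        constructor
        · rintro ⟨_, h2⟩
          obtain ⟨h3, h4⟩ := (H.iff _ _).1 h2
          rw [if_pos h3]; omega
        · intro h2
          split_ifs at h2 with h3
          · have := (H.iff i.val j).2 ⟨h3, by omega⟩
            exact ⟨H.lt_m this, this⟩
          · omega
      rw [this, card_range]
    · intro j
      by_contra hlt
      push Not at hlt
      obtain ⟨h1, h2⟩ := (H.iff n j).1 hlt
      rw [hz n le_rfl h1] at h2
      omega
  · intro β hβ
    rw [av_mul_Q]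
    exact Alt_Q_pos h m β hβ ∅

theorem schur_zero {k : ℕ} {lam : ℕ → ℤ} (i : ℕ) (hi : n ≤ i) (hik : i < k) (h0 : 0 < lam i) :
    schur k lam 1 n = 0 := by
  unfold schur
  split_ifs with hp
  · have : IsEmpty (SSYT k lam 1 n) := by
      refine ⟨fun T => ?_⟩
      have key : ∀ i' ≤ i, i' + 1 ≤ T.entry i' 0 := by
        intro i'
        induction i' with
        | zero =>
          intro h
          exact T.lower 0 0 (by omega) (lt_of_lt_of_le h0 (partition_le hp i 0 (by omega) hik))
        | succ i' ih =>
          intro h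
          have h1 := ih (by omega)
          have h2 := T.col_strict i' (i'+1) 0 (by omega) (by omega)
            (lt_of_lt_of_le h0 (partition_le hp i (i'+1) (by omega) hik))
          omega
      have h1 := key i le_rfl
      have h2 := T.upper i 0 hik h0
      omega
    exact finsum_of_isEmpty _
  · rfl

theorem schurPositive_of (g : MvPolynomial (Fin n) ℤ) (hg : av (rho n) * g ∈ PosAlt n) :
    SchurPositive n (emb n g) := by
  suffices H : ∀ f ∈ PosAlt n, ∃ g' : MvPolynomial (Fin n) ℤ, f = av (rho n) * g' ∧
      SchurPositive n (emb n g') by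
    obtain ⟨g', h1, h2⟩ := H _ hg
    rw [mul_left_cancel₀ av_rho_ne_zero h1]
    exact h2
  intro f hf
  induction hf using AddSubmonoid.closure_induction with
  | mem f hf =>
    obtain ⟨β, hβ, rfl⟩ := hf
    let lam : ℕ → ℤ := fun i => if hi : i < n then (β ⟨i, hi⟩ : ℤ) - (n - 1 - i : ℕ) else 0
    have hlow : ∀ d, ∀ i : Fin n, i.val + d + 1 = n → d ≤ β i := by
      intro d
      induction d with
      | zero => intro i _; omega
      | succ d ih =>
        intro i hi
        have h1 := ih ⟨i.val + 1, by omega⟩ (by simp; omega)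
        have h2 := @hβ i ⟨i.val + 1, by omega⟩ (by rw [Fin.lt_def]; simp)
        omega
    have hlow' : ∀ i : Fin n, n - 1 - i.val ≤ β i := fun i => hlow _ i (by omega)
    have hp : IsPartitionSeq n lam := by
      constructor
      · intro i hi
        simp only [lam]
        rw [dif_pos hi, dif_pos (by omega)]
        have h2 := @hβ ⟨i, by omega⟩ ⟨i + 1, hi⟩ (by rw [Fin.lt_def]; simp)
        omega
      · intro i hi
        simp only [lam]
        rw [dif_pos hi]
        have := hlow' ⟨i, hi⟩
        simp only at this
        omega
    obtain ⟨g', h1, h2, _⟩ := schur_facts (n := n) hp (fun i h1 h2 => by omega)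
    refine ⟨g', ?_, [(n, lam)], by simpa using hp, by simp [h1]⟩
    rw [h2]
    congr 1
    funext i
    unfold shp rho
    have e : lam i.val = (β i : ℤ) - (n - 1 - i.val : ℕ) := by simp only [lam]; rw [dif_pos i.2]
    rw [if_pos i.2, e]
    have := hlow' i
    omega
  | zero => exact ⟨0, by simp, [], by simp, by simp⟩
  | add f f' _ _ hf hf' =>
    obtain ⟨g, e, L, h1, h2⟩ := hf
    obtain ⟨g', e', L', h1', h2'⟩ := hf'
    refine ⟨g + g', by rw [e, e', mul_add], L ++ L', ?_, ?_⟩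
    · intro p hp
      rcases List.mem_append.1 hp with h | h
      · exact h1 p h
      · exact h1' p h
    · rw [map_add, h2, h2', List.map_append, List.sum_append]

/-! ### Plücker relations -/

theorem det_plucker {R : Type*} [CommRing R] (M : Matrix (Fin n) (Fin n) R) (p q : Fin n)
    (hpq : p ≠ q) (x y z w : Fin n → R) :
    ((M.updateRow p x).updateRow q y).det * ((M.updateRow p z).updateRow q w).det -
    ((M.updateRow p x).updateRow q z).det * ((M.updateRow p y).updateRow q w).det +
    ((M.updateRow p x).updateRow q w).det * ((M.updateRow p y).updateRow q z).det = 0 := by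
  classical
  set D : (Fin n → R) → (Fin n → R) → R := fun a b => ((M.updateRow p a).updateRow q b).det with hD
  let φ : (Fin n → R) →ₗ[R] R :=
    (Matrix.detRowAlternating (n := Fin n) (R := R)).toMultilinearMap.toLinearMap (M.updateRow q w) p
  have hφ : ∀ v, φ v = D v w := by
    intro v
    show Matrix.det (Function.update (M.updateRow q w) p v) = _
    simp only [hD]
    congr 1
    exact Function.update_comm hpq.symm _ _ _
  set A := (M.updateRow p x).updateRow q y with hA
  have h1 : A.det • z = ∑ i, (A.updateRow i z).det • A i := by
    have := Matrix.mulVec_cramer A.transpose z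
    rw [Matrix.det_transpose] at this
    rw [← this]
    funext j
    simp only [Matrix.mulVec, dotProduct, Matrix.cramer_transpose_apply, Finset.sum_apply,
      Pi.smul_apply, smul_eq_mul, Matrix.transpose_apply]
    exact Finset.sum_congr rfl fun i _ => mul_comm _ _
  have h2 : A.det * D z w = ∑ i, (A.updateRow i z).det * D (A i) w := by
    have h3 := congrArg φ h1
    rw [map_smul, map_sum, hφ, smul_eq_mul] at h3
    rw [h3]
    refine Finset.sum_congr rfl fun i _ => ?_
    rw [← hφ]
    exact φ.map_smul (A.updateRow i z).det (A i)
  have hz : ∀ i, i ≠ p → i ≠ q → D (A i) w = 0 := by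
    intro i hip hiq
    simp only [hD]
    apply Matrix.det_zero_of_row_eq hip
    rw [Matrix.updateRow_ne hiq, Matrix.updateRow_ne hip, Matrix.updateRow_ne hpq,
      Matrix.updateRow_self, hA, Matrix.updateRow_ne hiq, Matrix.updateRow_ne hip]
  rw [← Finset.add_sum_erase _ _ (mem_univ p),
    ← Finset.add_sum_erase _ _ (show q ∈ univ.erase p from mem_erase.2 ⟨hpq.symm, mem_univ _⟩),
    Finset.sum_eq_zero (s := (univ.erase p).erase q)] at h2
  · have e1 : A p = x := by
      rw [hA, Matrix.updateRow_ne hpq, Matrix.updateRow_self]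
    have e2 : A q = y := by rw [hA, Matrix.updateRow_self]
    have e3 : (A.updateRow q z).det = D x z := by
      simp only [hA, hD]
      congr 1
      exact Function.update_idem _ _ _
    have e4 : (A.updateRow p z).det = - D y z := by
      have : A.updateRow p z = ((M.updateRow p y).updateRow q z).submatrix (Equiv.swap p q) id := by
        ext i j
        simp only [Matrix.submatrix_apply, id]
        by_cases hi : i = p
        · subst hi
          rw [Equiv.swap_apply_left, Matrix.updateRow_self, Matrix.updateRow_self]
        · by_cases hi2 : i = q
          · subst hi2
            rw [Equiv.swap_apply_right, Matrix.updateRow_ne hi, e2, Matrix.updateRow_ne hpq,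
              Matrix.updateRow_self]
          · rw [Equiv.swap_apply_of_ne_of_ne hi hi2, Matrix.updateRow_ne hi, hA,
              Matrix.updateRow_ne hi2, Matrix.updateRow_ne hi, Matrix.updateRow_ne hi2,
              Matrix.updateRow_ne hi]
      rw [this, Matrix.det_permute, Equiv.Perm.sign_swap hpq]
      simp [hD]
    rw [e1, e2, e3, e4] at h2
    have e5 : A.det = D x y := rfl
    rw [e5] at h2
    show D x y * D z w - D x z * D y w + D x w * D y z = 0
    rw [h2]; ring
  · intro i hi
    rw [mem_erase, mem_erase] at hi
    rw [hz i hi.2.1 hi.1, mul_zero]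

noncomputable def avn (n : ℕ) (f : ℕ → ℕ) : MvPolynomial (Fin n) ℤ := av (fun i : Fin n => f i.val)

theorem avn_congr {f g : ℕ → ℕ} (h : ∀ i < n, f i = g i) : avn n f = avn n g := by
  unfold avn; congr 1; funext i; exact h i i.2

def br (U : ℕ → ℕ) (p q x y : ℕ) : ℕ → ℕ := fun i => if i = q then y else if i = p then x else U i

theorem avn_plucker (U : ℕ → ℕ) (p q : ℕ) (hp : p < n) (hq : q < n) (hpq : p ≠ q) (x y z w : ℕ) :
    avn n (br U p q x y) * avn n (br U p q z w) - avn n (br U p q x z) * avn n (br U p q y w) +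
      avn n (br U p q x w) * avn n (br U p q y z) = 0 := by
  have key : ∀ a b, avn n (br U p q a b) =
      (((Matrix.of fun i j : Fin n => (X j : MvPolynomial (Fin n) ℤ) ^ U i.val).updateRow ⟨p, hp⟩
        (fun j => X j ^ a)).updateRow ⟨q, hq⟩ (fun j => X j ^ b)).det := by
    intro a b
    unfold avn
    rw [av_eq_det]
    congr 1
    ext1 i j
    unfold br
    by_cases h1 : i = ⟨q, hq⟩
    · subst h1
      rw [Matrix.updateRow_self]; simp
    · have h1' : i.val ≠ q := fun h => h1 (Fin.ext h)
      rw [Matrix.updateRow_ne h1]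
      by_cases h2 : i = ⟨p, hp⟩
      · subst h2
        rw [Matrix.updateRow_self]; simp [hpq]
      · have h2' : i.val ≠ p := fun h => h2 (Fin.ext h)
        rw [Matrix.updateRow_ne h2]; simp [h1', h2']
  simp only [key]
  exact det_plucker _ _ _ (fun h => hpq (Fin.mk.inj_iff.1 h)) _ _ _ _

theorem avn_cyc (f g : ℕ → ℕ) (a b : ℕ) (hab : a ≤ b) (hb : b < n)
    (h : ∀ i < n, g i = if i < a ∨ b < i then f i else if i = b then f a else f (i + 1)) :
    avn n g = (-1) ^ (b - a) * avn n f := by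
  have : NeZero n := ⟨by omega⟩
  unfold avn
  rw [av_eq_det, av_eq_det]
  have ha : a < n := by omega
  have e : (Matrix.of fun i j : Fin n => (X j : MvPolynomial (Fin n) ℤ) ^ g i.val) =
      (Matrix.of fun i j : Fin n => (X j : MvPolynomial (Fin n) ℤ) ^ f i.val).submatrix
        (Fin.cycleIcc ⟨a, ha⟩ ⟨b, hb⟩) id := by
    ext1 i j
    simp only [Matrix.of_apply, Matrix.submatrix_apply, id]
    congr 1
    rw [h i i.2]
    by_cases h1 : i.val < a
    · rw [if_pos (Or.inl h1), Fin.cycleIcc_of_lt (by rw [Fin.lt_def]; exact h1)]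
    by_cases h2 : b < i.val
    · rw [if_pos (Or.inr h2), Fin.cycleIcc_of_gt (by rw [Fin.lt_def]; exact h2)]
    rw [if_neg (by omega)]
    by_cases h3 : i.val = b
    · have : i = ⟨b, hb⟩ := Fin.ext h3
      rw [if_pos h3, this, Fin.cycleIcc_of_last (by rw [Fin.le_def]; exact hab)]
    · rw [if_neg h3, Fin.cycleIcc_of_ge_of_lt (by rw [Fin.le_def]; simp; omega)
        (by rw [Fin.lt_def]; simp; omega)]
      congr 1
      rw [Fin.val_add_one_of_lt' (by omega)]
  rw [e, Matrix.det_permute, Fin.sign_cycleIcc_of_le (by rw [Fin.le_def]; exact hab)]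
  simp

theorem sq_sign (k : ℕ) : ((-1 : MvPolynomial (Fin n) ℤ) ^ k) * (-1) ^ k = 1 := by
  rw [← mul_pow]; simp

set_option maxHeartbeats 4000000 in
theorem plucker2 (c r t : ℕ) (hc : 2 ≤ c) (ht : t + 2 ≤ r) (hrn : r ≤ n) :
    avn n (fun i => (n - 1 - i) + if i < r then c else 0) *
      avn n (fun i => (n - 1 - i) + if i < t then c else if i + 2 < r then c - 1 else
        if i + 2 = r then c - 2 else 0) =
    avn n (fun i => (n - 1 - i) + if i + 1 < r then c else if i + 1 = r then c - 1 else 0) *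
      avn n (fun i => (n - 1 - i) + if i < t then c else if i + 1 < r then c - 1 else 0) -
    avn n (fun i => (n - 1 - i) + if i + 1 < r then c else 0) *
      avn n (fun i => (n - 1 - i) + if i < t then c else if i < r then c - 1 else 0) := by
  let U : ℕ → ℕ := fun i => (n - 1 - i) + if i + 1 < r then c else 0
  have P := avn_plucker (n := n) U t (r - 1) (by omega) (by omega) (by omega)
    (c + n - 1 - t) (c + n - r) (c + n - r - 1) (n - r)
  have hs := sq_sign (n := n) (r - 2 - t)
  set s : MvPolynomial (Fin n) ℤ := (-1) ^ (r - 2 - t) with hs'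
  have eE : avn n (fun i => (n - 1 - i) + if i < r then c else 0) =
      avn n (br U t (r - 1) (c + n - 1 - t) (c + n - r)) := by
    apply avn_congr; intro i hi; simp only [br, U]; split_ifs <;> omega
  have eA : avn n (fun i => (n - 1 - i) + if i + 1 < r then c else if i + 1 = r then c - 1 else 0) =
      avn n (br U t (r - 1) (c + n - 1 - t) (c + n - r - 1)) := by
    apply avn_congr; intro i hi; simp only [br, U]; split_ifs <;> omega
  have eG : avn n (fun i => (n - 1 - i) + if i + 1 < r then c else 0) =
      avn n (br U t (r - 1) (c + n - 1 - t) (n - r)) := by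
    apply avn_congr; intro i hi; simp only [br, U]; split_ifs <;> omega
  have eB : avn n (fun i => (n - 1 - i) + if i < t then c else if i + 1 < r then c - 1 else 0) =
      s * avn n (br U t (r - 1) (c + n - r) (n - r)) := by
    apply avn_cyc _ _ t (r - 2) (by omega) (by omega)
    intro i hi; simp only [br, U]; split_ifs <;> omega
  have eH : avn n (fun i => (n - 1 - i) + if i < t then c else if i < r then c - 1 else 0) =
      s * avn n (br U t (r - 1) (c + n - r) (c + n - r - 1)) := by
    apply avn_cyc _ _ t (r - 2) (by omega) (by omega)
    intro i hi; simp only [br, U]; split_ifs <;> omega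
  have eF : avn n (fun i => (n - 1 - i) + if i < t then c else if i + 2 < r then c - 1 else
        if i + 2 = r then c - 2 else 0) =
      s * avn n (br U t (r - 1) (c + n - r - 1) (n - r)) := by
    apply avn_cyc _ _ t (r - 2) (by omega) (by omega)
    intro i hi; simp only [br, U]; split_ifs <;> omega
  rw [eE, eA, eG, eB, eH, eF]
  linear_combination s * P

theorem plucker1_alg {R : Type*} [CommRing R] (s1 s2 s3 e E F H G C D : R) (hs1 : s1 * s1 = 1)
    (P : (s1 * (s2 * (e * E))) * F - (s1 * (e * H)) * G + (s1 * D) * (e * C) = 0) :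
    e * (E * (s3 * (s2 * F))) = e * (H * (s3 * G) - C * (s3 * D)) := by
  linear_combination (s1 * s3) * P - s3 * e * (s2 * E * F - H * G + C * D) * hs1

set_option maxHeartbeats 4000000 in
theorem plucker1 (c r t : ℕ) (hc : 1 ≤ c) (ht1 : 1 ≤ t) (ht : t + 1 ≤ r) (hrn : r ≤ n) :
    avn n (fun i => (n - 1 - i) + if i < r then c else 0) *
      avn n (fun i => (n - 1 - i) + if i + 1 < t then c else if i + 1 < r then c - 1 else 0) =
    avn n (fun i => (n - 1 - i) + if i < t then c else if i < r then c - 1 else 0) *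
      avn n (fun i => (n - 1 - i) + if i + 1 < r then c else 0) -
    avn n (fun i => (n - 1 - i) + if i < r then c - 1 else 0) *
      avn n (fun i => (n - 1 - i) + if i < t then c + 1 else if i + 1 < r then c else 0) := by
  have shift : ∀ f : ℕ → ℕ, avn n (fun i => f i + 1) = mono univ * avn n f := fun f => av_shift _
  let U : ℕ → ℕ := fun i => if i + 1 < r then c + n - 1 - i else n - i
  have P := avn_plucker (n := n) U (t - 1) (r - 1) (by omega) (by omega) (by omega)
    (c + n) (c + n - t) (c + n - r) 0
  have hs1 := sq_sign (n := n) (t - 1)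
  have hs2 := sq_sign (n := n) (r - 1 - t)
  have hs3 := sq_sign (n := n) (n - r)
  have hr1 : n - 1 - (r - 1) = n - r := by omega
  have hr2 : r - 2 - (t - 1) = r - 1 - t := by omega
  have ht0 : t - 1 - 0 = t - 1 := by omega
  -- E
  have eE1 : avn n (br U (t - 1) (r - 1) (c + n) (c + n - t)) = (-1) ^ (t - 1) *
      avn n (fun i => if i < t then n + c - i else if i + 1 < r then c + n - 1 - i else
        if i + 1 = r then c + n - t else n - i) := by
    rw [← ht0]
    apply avn_cyc _ _ 0 (t - 1) (by omega) (by omega)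
    intro i hi; simp only [br, U]; split_ifs <;> omega
  have eE2 : avn n (fun i => if i < t then n + c - i else if i + 1 < r then c + n - 1 - i else
        if i + 1 = r then c + n - t else n - i) = (-1) ^ (r - 1 - t) *
      (mono univ * avn n (fun i => (n - 1 - i) + if i < r then c else 0)) := by
    rw [← shift]
    apply avn_cyc _ _ t (r - 1) (by omega) (by omega)
    intro i hi; (try dsimp only); split_ifs <;> omega
  -- F
  have eF1 : avn n (fun i => if i + 1 < t then c + n - 1 - i else if i + 1 < r then c + n - 2 - i
      else if i + 1 = r then 0 else n - i) = (-1) ^ (r - 1 - t) *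
      avn n (br U (t - 1) (r - 1) (c + n - r) 0) := by
    rw [← hr2]
    apply avn_cyc _ _ (t - 1) (r - 2) (by omega) (by omega)
    intro i hi; simp only [br, U]; split_ifs <;> omega
  have eF2 : avn n (fun i => (n - 1 - i) + if i + 1 < t then c else if i + 1 < r then c - 1 else 0)
      = (-1) ^ (n - r) * avn n (fun i => if i + 1 < t then c + n - 1 - i else
        if i + 1 < r then c + n - 2 - i else if i + 1 = r then 0 else n - i) := by
    rw [← hr1]
    apply avn_cyc _ _ (r - 1) (n - 1) (by omega) (by omega)
    intro i hi; (try dsimp only); split_ifs <;> omega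
  -- H
  have eH : avn n (br U (t - 1) (r - 1) (c + n) (c + n - r)) = (-1) ^ (t - 1) * (mono univ *
      avn n (fun i => (n - 1 - i) + if i < t then c else if i < r then c - 1 else 0)) := by
    rw [← ht0, ← shift]
    apply avn_cyc _ _ 0 (t - 1) (by omega) (by omega)
    intro i hi; simp only [br, U]; split_ifs <;> omega
  -- G
  have eG : avn n (fun i => (n - 1 - i) + if i + 1 < r then c else 0) = (-1) ^ (n - r) *
      avn n (br U (t - 1) (r - 1) (c + n - t) 0) := by
    rw [← hr1]
    apply avn_cyc _ _ (r - 1) (n - 1) (by omega) (by omega)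
    intro i hi; simp only [br, U]; split_ifs <;> omega
  -- D
  have eD1 : avn n (br U (t - 1) (r - 1) (c + n) 0) = (-1) ^ (t - 1) *
      avn n (fun i => if i < t then c + n - i else if i + 1 < r then c + n - 1 - i else
        if i + 1 = r then 0 else n - i) := by
    rw [← ht0]
    apply avn_cyc _ _ 0 (t - 1) (by omega) (by omega)
    intro i hi; simp only [br, U]; split_ifs <;> omega
  have eD2 : avn n (fun i => (n - 1 - i) + if i < t then c + 1 else if i + 1 < r then c else 0) =
      (-1) ^ (n - r) * avn n (fun i => if i < t then c + n - i else if i + 1 < r then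
        c + n - 1 - i else if i + 1 = r then 0 else n - i) := by
    rw [← hr1]
    apply avn_cyc _ _ (r - 1) (n - 1) (by omega) (by omega)
    intro i hi; (try dsimp only); split_ifs <;> omega
  -- C
  have eC : avn n (br U (t - 1) (r - 1) (c + n - t) (c + n - r)) = mono univ *
      avn n (fun i => (n - 1 - i) + if i < r then c - 1 else 0) := by
    rw [← shift]
    apply avn_congr
    intro i hi; simp only [br, U]; split_ifs <;> omega
  rw [eE1, eE2, eH, eD1, eC] at P
  rw [eF1] at eF2
  apply mul_left_cancel₀ (mono_ne_zero (univ : Finset (Fin n)))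
  rw [eF2, eG, eD2]
  exact plucker1_alg _ _ _ _ _ _ _ _ _ _ hs1 P

/-! ### Assembly -/

theorem facts_avn {k : ℕ} {lam : ℕ → ℤ} (hp : IsPartitionSeq k lam)
    (hz : ∀ i, n ≤ i → i < k → lam i = 0) (f : ℕ → ℕ)
    (hf : ∀ i < n, f i = (n - 1 - i) + if i < k then (lam i).toNat else 0) :
    ∃ g : MvPolynomial (Fin n) ℤ, schur k lam 1 n = emb n g ∧ av (rho n) * g = avn n f ∧
      ∀ β : Fin n → ℕ, StrictAnti β → av β * g ∈ PosAlt n := by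
  obtain ⟨g, h1, h2, h3⟩ := schur_facts hp hz
  refine ⟨g, h1, ?_, h3⟩
  rw [h2]
  unfold avn
  congr 1
  funext i
  rw [hf i i.2]
  rfl

theorem schurPositive_zero : SchurPositive n 0 := ⟨[], by simp, by simp⟩

theorem part1 (c r t : ℕ) (hc : 1 ≤ c) (ht : t + 1 ≤ r) (hrn : r ≤ n) :
    ∃ f : MvPolynomial (Fin n) ℤ,
      avn n (fun i => (n - 1 - i) + if i < r then c else 0) * (av (rho n) * f) =
      avn n (fun i => (n - 1 - i) + if i < t then c else if i < r then c - 1 else 0) *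
        avn n (fun i => (n - 1 - i) + if i + 1 < r then c else 0) -
      avn n (fun i => (n - 1 - i) + if i < r then c - 1 else 0) *
        avn n (fun i => (n - 1 - i) + if i < t then c + 1 else if i + 1 < r then c else 0) ∧
      avn n (fun i => (n - 1 - i) + if i < r then c else 0) * f ∈ PosAlt n := by
  rcases Nat.eq_zero_or_pos t with h0 | h0
  · subst h0
    refine ⟨0, ?_, by rw [mul_zero]; exact zero_mem _⟩
    simp
  · have hp : IsPartitionSeq (r - 1) (fun j => if j + 1 < t then (c : ℤ) else (c : ℤ) - 1) := by
      constructor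
      · intro i hi; (try dsimp only); split_ifs <;> omega
      · intro i hi; (try dsimp only); split_ifs <;> omega
    obtain ⟨g, -, h2, h3⟩ := facts_avn (n := n) hp (fun i h1 h2 => by omega)
      (fun i => (n - 1 - i) + if i + 1 < t then c else if i + 1 < r then c - 1 else 0)
      (by intro i hi; (try dsimp only); split_ifs <;> omega)
    refine ⟨g, ?_, ?_⟩
    · rw [h2]
      exact plucker1 c r t hc h0 ht hrn
    · apply h3
      intro p q hpq
      have h1 : p.val < q.val := hpq
      have h2 := q.2
      dsimp only
      split_ifs <;> omega

theorem part2 (c r t : ℕ) (hc : 1 ≤ c) (ht : t + 1 ≤ r) (hrn : r ≤ n) :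
    ∃ f : MvPolynomial (Fin n) ℤ,
      avn n (fun i => (n - 1 - i) + if i < r then c else 0) * (av (rho n) * f) =
      avn n (fun i => (n - 1 - i) + if i + 1 < r then c else if i + 1 = r then c - 1 else 0) *
        avn n (fun i => (n - 1 - i) + if i < t then c else if i + 1 < r then c - 1 else 0) -
      avn n (fun i => (n - 1 - i) + if i + 1 < r then c else 0) *
        avn n (fun i => (n - 1 - i) + if i < t then c else if i < r then c - 1 else 0) ∧
      avn n (fun i => (n - 1 - i) + if i < r then c else 0) * f ∈ PosAlt n := by
  by_cases h0 : t + 1 = r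
  · refine ⟨0, ?_, by rw [mul_zero]; exact zero_mem _⟩
    rw [mul_zero, mul_zero, eq_comm, sub_eq_zero, mul_comm]
    congr 1
    · apply avn_congr; intro i hi; split_ifs <;> omega
    · apply avn_congr; intro i hi; split_ifs <;> omega
  by_cases h1 : c = 1
  · refine ⟨0, ?_, by rw [mul_zero]; exact zero_mem _⟩
    rw [mul_zero, mul_zero, eq_comm, sub_eq_zero]
    congr 1
    · apply avn_congr; intro i hi; split_ifs <;> omega
    · apply avn_congr; intro i hi; split_ifs <;> omega
  · have hp : IsPartitionSeq (r - 1)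
        (fun j => if j < t then (c : ℤ) else if j + 2 < r then (c : ℤ) - 1 else (c : ℤ) - 2) := by
      constructor
      · intro i hi; (try dsimp only); split_ifs <;> omega
      · intro i hi; (try dsimp only); split_ifs <;> omega
    obtain ⟨g, -, h2, h3⟩ := facts_avn (n := n) hp (fun i h1 h2 => by omega)
      (fun i => (n - 1 - i) + if i < t then c else if i + 2 < r then c - 1 else
        if i + 2 = r then c - 2 else 0)
      (by intro i hi; (try dsimp only); split_ifs <;> omega)
    refine ⟨g, ?_, ?_⟩
    · rw [h2]
      exact plucker2 c r t (by omega) (by omega) hrn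
    · apply h3
      intro p q hpq
      have h1 : p.val < q.val := hpq
      have h2 := q.2
      dsimp only
      split_ifs <;> omega

theorem case_le (c r t : ℕ) (hc : 1 ≤ c) (ht : t + 1 ≤ r) (hrn : r ≤ n) :
    SchurPositive n
      (schur r (fun j => if j < r - 1 then (c : ℤ) else (c : ℤ) - 1) 1 n *
          schur (r - 1) (fun j => if j < t then (c : ℤ) else (c : ℤ) - 1) 1 n -
        schur r (fun _ => (c : ℤ) - 1) 1 n *
          schur (r - 1) (fun j => if j < t then (c : ℤ) + 1 else (c : ℤ)) 1 n) := by
  have pA : IsPartitionSeq r (fun j => if j < r - 1 then (c : ℤ) else (c : ℤ) - 1) := by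
    constructor
    · intro i hi; (try dsimp only); split_ifs <;> omega
    · intro i hi; (try dsimp only); split_ifs <;> omega
  have pB : IsPartitionSeq (r - 1) (fun j => if j < t then (c : ℤ) else (c : ℤ) - 1) := by
    constructor
    · intro i hi; (try dsimp only); split_ifs <;> omega
    · intro i hi; (try dsimp only); split_ifs <;> omega
  have pC : IsPartitionSeq r (fun _ => (c : ℤ) - 1) := by
    constructor
    · intro i hi; (try dsimp only); omega
    · intro i hi; (try dsimp only); omega
  have pD : IsPartitionSeq (r - 1) (fun j => if j < t then (c : ℤ) + 1 else (c : ℤ)) := by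
    constructor
    · intro i hi; (try dsimp only); split_ifs <;> omega
    · intro i hi; (try dsimp only); split_ifs <;> omega
  obtain ⟨gA, sA, hA, -⟩ := facts_avn (n := n) pA (fun i h1 h2 => by omega)
    (fun i => (n - 1 - i) + if i + 1 < r then c else if i + 1 = r then c - 1 else 0)
    (by intro i hi; (try dsimp only); split_ifs <;> omega)
  obtain ⟨gB, sB, hB, -⟩ := facts_avn (n := n) pB (fun i h1 h2 => by omega)
    (fun i => (n - 1 - i) + if i < t then c else if i + 1 < r then c - 1 else 0)
    (by intro i hi; (try dsimp only); split_ifs <;> omega)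
  obtain ⟨gC, sC, hC, -⟩ := facts_avn (n := n) pC (fun i h1 h2 => by omega)
    (fun i => (n - 1 - i) + if i < r then c - 1 else 0)
    (by intro i hi; (try dsimp only); split_ifs <;> omega)
  obtain ⟨gD, sD, hD, -⟩ := facts_avn (n := n) pD (fun i h1 h2 => by omega)
    (fun i => (n - 1 - i) + if i < t then c + 1 else if i + 1 < r then c else 0)
    (by intro i hi; (try dsimp only); split_ifs <;> omega)
  obtain ⟨f1, e1, m1⟩ := part1 (n := n) c r t hc ht hrn
  obtain ⟨f2, e2, m2⟩ := part2 (n := n) c r t hc ht hrn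
  rw [sA, sB, sC, sD, ← map_mul, ← map_mul, ← map_sub]
  apply schurPositive_of
  rw [← hA, ← hB] at e2
  rw [← hC, ← hD] at e1
  have key : av (rho n) * (gA * gB - gC * gD) =
      avn n (fun i => (n - 1 - i) + if i < r then c else 0) * f1 +
      avn n (fun i => (n - 1 - i) + if i < r then c else 0) * f2 := by
    apply mul_left_cancel₀ (av_rho_ne_zero (n := n))
    linear_combination - e1 - e2
  rw [key]
  exact add_mem m1 m2

theorem case_lt (c r t : ℕ) (hc : 1 ≤ c) (ht : t + 1 ≤ r) (hrn : n < r) :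
    schur r (fun j => if j < r - 1 then (c : ℤ) else (c : ℤ) - 1) 1 n *
          schur (r - 1) (fun j => if j < t then (c : ℤ) else (c : ℤ) - 1) 1 n -
        schur r (fun _ => (c : ℤ) - 1) 1 n *
          schur (r - 1) (fun j => if j < t then (c : ℤ) + 1 else (c : ℤ)) 1 n = 0 := by
  by_cases hc2 : 2 ≤ c
  · rw [schur_zero (lam := fun j => if j < r - 1 then (c : ℤ) else (c : ℤ) - 1) (r - 1) (by omega)
      (by omega) (by (try dsimp only); split_ifs <;> omega),
      schur_zero (lam := fun _ => (c : ℤ) - 1) (r - 1) (by omega)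
      (by omega) (by (try dsimp only); omega)]
    simp
  by_cases hn2 : n < r - 1
  · rw [schur_zero (lam := fun j => if j < r - 1 then (c : ℤ) else (c : ℤ) - 1) n (by omega)
      (by omega) (by (try dsimp only); split_ifs; omega),
      schur_zero (lam := fun j => if j < t then (c : ℤ) + 1 else (c : ℤ)) n (by omega)
      (by omega) (by (try dsimp only); split_ifs <;> omega)]
    simp
  have hc1 : c = 1 := by omega
  have hr : r = n + 1 := by omega
  have pA : IsPartitionSeq r (fun j => if j < r - 1 then (c : ℤ) else (c : ℤ) - 1) := by
    constructor
    · intro i hi; (try dsimp only); split_ifs <;> omega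
    · intro i hi; (try dsimp only); split_ifs <;> omega
  have pB : IsPartitionSeq (r - 1) (fun j => if j < t then (c : ℤ) else (c : ℤ) - 1) := by
    constructor
    · intro i hi; (try dsimp only); split_ifs <;> omega
    · intro i hi; (try dsimp only); split_ifs <;> omega
  have pC : IsPartitionSeq r (fun _ => (c : ℤ) - 1) := by
    constructor
    · intro i hi; (try dsimp only); omega
    · intro i hi; (try dsimp only); omega
  have pD : IsPartitionSeq (r - 1) (fun j => if j < t then (c : ℤ) + 1 else (c : ℤ)) := by
    constructor
    · intro i hi; (try dsimp only); split_ifs <;> omega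
    · intro i hi; (try dsimp only); split_ifs <;> omega
  obtain ⟨gA, sA, hA, -⟩ := facts_avn (n := n) pA
    (fun i h1 h2 => by (try dsimp only); split_ifs <;> omega)
    (fun i => (n - 1 - i) + 1)
    (by intro i hi; (try dsimp only); split_ifs <;> omega)
  obtain ⟨gB, sB, hB, -⟩ := facts_avn (n := n) pB (fun i h1 h2 => by omega)
    (fun i => (n - 1 - i) + if i < t then 1 else 0)
    (by intro i hi; (try dsimp only); split_ifs <;> omega)
  obtain ⟨gC, sC, hC, -⟩ := facts_avn (n := n) pC (fun i h1 h2 => by (try dsimp only); omega)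
    (fun i => n - 1 - i)
    (by intro i hi; (try dsimp only); split_ifs <;> omega)
  obtain ⟨gD, sD, hD, -⟩ := facts_avn (n := n) pD (fun i h1 h2 => by omega)
    (fun i => ((n - 1 - i) + if i < t then 1 else 0) + 1)
    (by intro i hi; (try dsimp only); split_ifs <;> omega)
  have shift : ∀ f : ℕ → ℕ, avn n (fun i => f i + 1) = mono univ * avn n f := fun f => av_shift _
  rw [shift] at hA
  rw [shift (fun i => (n - 1 - i) + if i < t then 1 else 0)] at hD
  have h0 : avn n (fun i => n - 1 - i) = av (rho n) := rfl
  rw [h0] at hA hC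
  rw [sA, sB, sC, sD, ← map_mul, ← map_mul, ← map_sub]
  have key : gA * gB - gC * gD = 0 := by
    apply mul_left_cancel₀ (av_rho_ne_zero (n := n))
    apply mul_left_cancel₀ (av_rho_ne_zero (n := n))
    rw [mul_zero, mul_zero]
    linear_combination (av (rho n) * gB) * hA + (mono univ * av (rho n)) * hB
      - (av (rho n) * gD) * hC - av (rho n) * hD
  rw [key, map_zero]

end SchurLR

/-- for `c, r ≥ 1`, `0 ≤ t ≤ r-1` and `n ≥ 1`,
`s^{[n]}_{(c^{r-1},c-1)} · s^{[n]}_{(c^t,(c-1)^{r-t-1})}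
 - s^{[n]}_{(c-1)^r} · s^{[n]}_{((c+1)^t,c^{r-t-1})}` is Schur positive. -/
theorem stmt_16 (c r t n : ℕ) (hc : 1 ≤ c) (hr : 1 ≤ r) (ht : t ≤ r - 1) (hn : 1 ≤ n) :
    SchurPositive n
      (schur r (fun j => if j < r - 1 then (c : ℤ) else (c : ℤ) - 1) 1 n *
          schur (r - 1) (fun j => if j < t then (c : ℤ) else (c : ℤ) - 1) 1 n -
        schur r (fun _ => (c : ℤ) - 1) 1 n *
          schur (r - 1) (fun j => if j < t then (c : ℤ) + 1 else (c : ℤ)) 1 n) := by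
  rcases Nat.lt_or_ge n r with h | h
  · rw [SchurLR.case_lt c r t hc (by omega) h]
    exact SchurLR.schurPositive_zero
  · exact SchurLR.case_le c r t hc (by omega) h
end

section
/- Let k ≥ 1, let ν = (ν_1 ≥ ν_2 ≥ … ≥ ν_{k+1} ≥ 0) be a partition, and let n ≥ 1. Then, as polynomials in x_1,…,x_n (the Fulmek–Kleber identity): s^{[n]}_{(ν_1,…,ν_k)} · s^{[n]}_{(ν_2,…,ν_{k+1})} = s^{[n]}_{(ν_2,…,ν_k)} · s^{[n]}_{(ν_1,…,ν_{k+1})} + s^{[n]}_{(ν_2−1,…,ν_{k+1}−1)} · s^{[n]}_{(ν_1+1,…,ν_k+1)}, where by convention s^{[n]}_α := 0 if the integer sequence α is not a partition (i.e., contains a negative entry). -/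
open Matrix in
theorem jac_aux {m : Type*} [Fintype m] [DecidableEq m] {R : Type*} [CommRing R]
    (M : Matrix (Fin 2 ⊕ m) (Fin 2 ⊕ m) R) :
    M.det * M.adjugate.toBlocks₁₁.det = M.det * (M.det * M.toBlocks₂₂.det) := by
  have h : M * fromBlocks M.adjugate.toBlocks₁₁ 0 M.adjugate.toBlocks₂₁ 1 =
      fromBlocks (M.det • (1 : Matrix (Fin 2) (Fin 2) R)) M.toBlocks₁₂ 0 M.toBlocks₂₂ := by
    have h1 := mul_adjugate M
    ext i j
    rcases j with j | j
    · have h2 := congrFun (congrFun h1 i) (Sum.inl j)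
      rw [Matrix.mul_apply] at h2 ⊢
      rw [Fintype.sum_sum_type] at h2 ⊢
      simp only [fromBlocks_apply₁₁, fromBlocks_apply₂₁, toBlocks₁₁, toBlocks₂₁, of_apply]
      rw [h2]
      rcases i with i | i <;> simp [Matrix.one_apply]
    · rw [Matrix.mul_apply, Fintype.sum_sum_type]
      rcases i with i | i <;> simp [Matrix.one_apply, toBlocks₁₂, toBlocks₂₂]
  have h3 := congrArg Matrix.det h
  rw [det_mul, det_fromBlocks_zero₁₂, det_fromBlocks_zero₂₁] at h3
  simp only [det_one, mul_one, det_smul, Fintype.card_fin] at h3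
  rw [h3]; ring

open Matrix in
theorem jac_gen {m : Type*} [Fintype m] [DecidableEq m] {R : Type*} [CommRing R]
    (M : Matrix (Fin 2 ⊕ m) (Fin 2 ⊕ m) R) :
    M.adjugate.toBlocks₁₁.det = M.det * M.toBlocks₂₂.det := by
  have h := mul_left_cancel₀ (det_mvPolynomialX_ne_zero (Fin 2 ⊕ m) ℤ)
    (jac_aux (mvPolynomialX (Fin 2 ⊕ m) (Fin 2 ⊕ m) ℤ))
  let φ : MvPolynomial ((Fin 2 ⊕ m) × (Fin 2 ⊕ m)) ℤ →+* R :=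
    MvPolynomial.eval₂Hom (Int.castRingHom R) (fun p => M p.1 p.2)
  have hφ : φ.mapMatrix (mvPolynomialX (Fin 2 ⊕ m) (Fin 2 ⊕ m) ℤ) = M := by
    ext i j; simp [φ, mvPolynomialX]
  have h2 := congrArg φ h
  rw [map_mul, RingHom.map_det, RingHom.map_det, RingHom.map_det, hφ] at h2
  have e1 : φ.mapMatrix (mvPolynomialX (Fin 2 ⊕ m) (Fin 2 ⊕ m) ℤ).adjugate.toBlocks₁₁
      = M.adjugate.toBlocks₁₁ := by
    have := RingHom.map_adjugate φ (mvPolynomialX (Fin 2 ⊕ m) (Fin 2 ⊕ m) ℤ)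
    rw [hφ] at this
    rw [← this]; rfl
  have e2 : φ.mapMatrix (mvPolynomialX (Fin 2 ⊕ m) (Fin 2 ⊕ m) ℤ).toBlocks₂₂
      = M.toBlocks₂₂ := by
    conv_rhs => rw [← hφ]
    rfl
  rw [e1, e2] at h2
  exact h2

open Matrix in
theorem desnanot_jacobi {m : ℕ} {R : Type*} [CommRing R]
    (M : Matrix (Fin (m + 2)) (Fin (m + 2)) R) :
    (M.submatrix Fin.castSucc Fin.castSucc).det * (M.submatrix Fin.succ Fin.succ).det =
      (M.submatrix (fun i : Fin m => i.castSucc.succ) (fun i : Fin m => i.castSucc.succ)).det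
        * M.det +
      (M.submatrix Fin.succ Fin.castSucc).det * (M.submatrix Fin.castSucc Fin.succ).det := by
  let f : Fin 2 ⊕ Fin m → Fin (m + 2) :=
    Sum.elim (fun i => if i = 0 then 0 else Fin.last _) (fun i => i.castSucc.succ)
  have hf : Function.Injective f := by
    have v0 : (f (Sum.inl 0)).val = 0 := rfl
    have v1 : (f (Sum.inl 1)).val = m + 1 := rfl
    have v2 : ∀ i : Fin m, (f (Sum.inr i)).val = i.val + 1 := fun i => rfl
    rintro (a | a) (b | b) h
    · have h' := congrArg Fin.val h
      fin_cases a <;> fin_cases b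
      · rfl
      · exfalso; change (f (Sum.inl 0)).val = (f (Sum.inl 1)).val at h'; omega
      · exfalso; change (f (Sum.inl 1)).val = (f (Sum.inl 0)).val at h'; omega
      · rfl
    · have h' := congrArg Fin.val h
      have := v2 b
      exfalso
      fin_cases a
      · change (f (Sum.inl 0)).val = _ at h'; omega
      · change (f (Sum.inl 1)).val = _ at h'; omega
    · have h' := congrArg Fin.val h
      have := v2 a
      exfalso
      fin_cases b
      · change _ = (f (Sum.inl 0)).val at h'; omega
      · change _ = (f (Sum.inl 1)).val at h'; omega
    · have h' := congrArg Fin.val h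
      rw [v2, v2] at h'
      congr 1; ext; omega
  have hb : Function.Bijective f :=
    (Fintype.bijective_iff_injective_and_card f).2 ⟨hf, by simp; omega⟩
  let e := Equiv.ofBijective f hb
  have h := jac_gen (M.submatrix e e)
  rw [det_submatrix_equiv_self, adjugate_submatrix_equiv_self, det_fin_two] at h
  have h0 : e (Sum.inl 0) = 0 := rfl
  have h1 : e (Sum.inl 1) = Fin.last _ := rfl
  simp only [toBlocks₁₁, of_apply, submatrix_apply, h0, h1,
    adjugate_fin_succ_eq_det_submatrix] at h
  have h2 : (M.submatrix e e).toBlocks₂₂ =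
    M.submatrix (fun i : Fin m => i.castSucc.succ) (fun i : Fin m => i.castSucc.succ) := rfl
  rw [h2] at h
  have s0 : (Fin.succAbove (0 : Fin (m+2))) = Fin.succ := by ext i; simp
  have s1 : (Fin.succAbove (Fin.last (m+1))) = Fin.castSucc := by ext i; simp
  rw [s0, s1] at h
  have p : ((-1 : R)) ^ (m + 1) * (-1) ^ (m + 1) = 1 := by
    rw [← mul_pow]; simp
  simp only [Fin.val_zero, Fin.val_last, pow_add, pow_zero, zero_add, add_zero, one_mul] at h p
  linear_combination h + (M.submatrix Fin.succ Fin.castSucc).det *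
    (M.submatrix Fin.castSucc Fin.succ).det * p - 
    (M.submatrix Fin.succ Fin.succ).det * (M.submatrix Fin.castSucc Fin.castSucc).det * p

/-- Complete homogeneous polynomials, defined by recursion on the number of variables. -/
noncomputable def Hh : ℕ → ℤ → MvPolynomial ℕ ℤ
  | 0, m => if m = 0 then 1 else 0
  | n + 1, m => ∑ t ∈ Finset.Icc 0 m, MvPolynomial.X (n + 1) ^ (m - t).toNat * Hh n t

theorem Hh_neg (n : ℕ) (m : ℤ) (hm : m < 0) : Hh n m = 0 := by
  cases n with
  | zero => rw [Hh, if_neg (by omega)]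
  | succ n => rw [Hh, Finset.Icc_eq_empty (by omega), Finset.sum_empty]

theorem Hh_split (n : ℕ) (m' m : ℤ) (h : m' ≤ m) :
    Hh (n + 1) m = MvPolynomial.X (n + 1) ^ (m - m').toNat * Hh (n + 1) m' +
      ∑ t ∈ Finset.Ioc m' m, MvPolynomial.X (n + 1) ^ (m - t).toNat * Hh n t := by
  by_cases h0 : m' < 0
  · rw [Hh_neg _ _ h0, mul_zero, zero_add, Hh]
    apply Finset.sum_subset
    · intro t; simp only [Finset.mem_Icc, Finset.mem_Ioc]; omega
    · intro t h1 h2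
      rw [Hh_neg, mul_zero]
      simp only [Finset.mem_Icc, Finset.mem_Ioc] at h1 h2; omega
  · have hu : Finset.Icc 0 m = Finset.Icc 0 m' ∪ Finset.Ioc m' m := by
      ext t; simp only [Finset.mem_Icc, Finset.mem_Ioc, Finset.mem_union]; omega
    rw [Hh, hu, Finset.sum_union, Hh, Finset.mul_sum]
    · congr 1
      apply Finset.sum_congr rfl
      intro t ht
      rw [Finset.mem_Icc] at ht
      rw [← mul_assoc, ← pow_add]
      congr 2
      omega
    · rw [Finset.disjoint_left]
      intro t; simp only [Finset.mem_Icc, Finset.mem_Ioc]; omega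

/-- The Jacobi–Trudi determinant. -/
noncomputable def jt (n k : ℕ) (lam : ℕ → ℤ) : MvPolynomial ℕ ℤ :=
  Matrix.det (Matrix.of fun i j : Fin k => Hh n (lam i - i + j))

/-- Lower bound for the `i`-th part of a partition interlacing `lam`. -/
def lowB (k : ℕ) (lam : ℕ → ℤ) (i : ℕ) : ℤ := if i + 1 < k then lam (i + 1) else 0

/-- Extension by zero. -/
def extZ (k : ℕ) (mu : Fin k → ℤ) (i : ℕ) : ℤ := if h : i < k then mu ⟨i, h⟩ else 0

theorem extZ_fin (k : ℕ) (mu : Fin k → ℤ) (i : Fin k) : extZ k mu i = mu i := by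
  simp [extZ]

theorem lowB_le (k : ℕ) (lam : ℕ → ℤ) (hp : IsPartitionSeq k lam) (i : ℕ) (hi : i < k) :
    lowB k lam i ≤ lam i := by
  unfold lowB
  split_ifs with h
  · exact hp.1 i h
  · exact hp.2 i hi

theorem det_row_succ {R : Type*} [CommRing R] (k : ℕ) (A B : Matrix (Fin k) (Fin k) R)
    (c : Fin k → R)
    (h1 : ∀ (i : Fin k) (h : i.val + 1 < k) j, A i j = c i * A ⟨i.val + 1, h⟩ j + B i j)
    (h2 : ∀ (i : Fin k) (_ : ¬ i.val + 1 < k) j, A i j = B i j) : A.det = B.det := by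
  let U : Matrix (Fin k) (Fin k) R := Matrix.of fun i l =>
    (if i = l then 1 else 0) - (if l.val = i.val + 1 then c i else 0)
  have hU : U.det = 1 := by
    rw [Matrix.det_of_isUpperTriangular]
    · simp [U]
    · intro i j hij
      have hij' : j.val < i.val := hij
      have : i ≠ j := by rintro rfl; omega
      simp only [U, Matrix.of_apply]
      rw [if_neg this, if_neg (by omega), sub_zero]
  have hB : U * A = B := by
    ext i j
    rw [Matrix.mul_apply]
    simp only [U, Matrix.of_apply, sub_mul, ite_mul, one_mul, zero_mul, Finset.sum_sub_distrib,
      Finset.sum_ite_eq, Finset.mem_univ, if_true]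
    by_cases h : i.val + 1 < k
    · rw [Finset.sum_eq_single ⟨i.val + 1, h⟩]
      · rw [if_pos rfl, h1 i h j]; ring
      · intro b _ hb
        rw [if_neg]
        intro hb'; apply hb; ext; exact hb'
      · simp
    · rw [Finset.sum_eq_zero, h2 i h j, sub_zero]
      intro b _
      rw [if_neg]; have := b.isLt; omega
  rw [← hB, Matrix.det_mul, hU, one_mul]

theorem jt_step (n k : ℕ) (lam : ℕ → ℤ) (hp : IsPartitionSeq k lam) :
    jt (n + 1) k lam =
      ∑ mu ∈ Fintype.piFinset (fun i : Fin k => Finset.Icc (lowB k lam i) (lam i)),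
        (∏ i : Fin k, MvPolynomial.X (n + 1) ^ (lam i - mu i).toNat) * jt n k (extZ k mu) := by
  let B : Matrix (Fin k) (Fin k) (MvPolynomial ℕ ℤ) := fun i =>
    ∑ t ∈ Finset.Icc (lowB k lam i) (lam i),
      ((MvPolynomial.X (n + 1) ^ (lam i - t).toNat : MvPolynomial ℕ ℤ) •
        fun j : Fin k => Hh n (t - i + j))
  have hs : ∀ i j : Fin k, Hh (n + 1) (lam i - i + j) =
      MvPolynomial.X (n + 1) ^ (lam i - lowB k lam i + 1).toNat *
        Hh (n + 1) (lowB k lam i - (i + 1) + j) + B i j := by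
    intro i j
    have hl := lowB_le k lam hp i i.isLt
    rw [Hh_split n (lowB k lam i - (i + 1) + j) (lam i - i + j) (by omega)]
    congr 1
    · congr 3; omega
    · simp only [B, Finset.sum_apply, Pi.smul_apply, smul_eq_mul]
      symm
      apply Finset.sum_bij (fun (t : ℤ) _ => t - i + j)
      · intro t ht; simp only [Finset.mem_Icc, Finset.mem_Ioc] at ht ⊢; omega
      · intro a _ b _ h; omega
      · intro t ht
        refine ⟨t + i - j, ?_, by omega⟩
        simp only [Finset.mem_Icc, Finset.mem_Ioc] at ht ⊢; omega
      · intro t ht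
        congr 3; omega
  have hd : jt (n + 1) k lam = B.det := by
    apply det_row_succ k _ B
      (fun i => MvPolynomial.X (n + 1) ^ (lam i - lowB k lam i + 1).toNat)
    · intro i h j
      simp only [Matrix.of_apply]
      rw [hs i j]
      congr 3
      simp [lowB, h]
    · intro i h j
      simp only [Matrix.of_apply]
      rw [hs i j, Hh_neg, mul_zero, zero_add]
      have := j.isLt
      simp only [lowB, if_neg h]; omega
  rw [hd]
  change Matrix.detRowAlternating.toMultilinearMap B = _
  simp only [B]
  rw [MultilinearMap.map_sum_finset]
  apply Finset.sum_congr rfl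
  intro mu _
  rw [MultilinearMap.map_smul_univ, smul_eq_mul]
  congr 1
  unfold jt
  simp only [extZ_fin]
  rfl

theorem jt_zero_zero (k : ℕ) (lam : ℕ → ℤ) (h : ∀ i < k, lam i = 0) : jt 0 k lam = 1 := by
  unfold jt
  have : (Matrix.of fun i j : Fin k => Hh 0 (lam i - i + j)) = 1 := by
    ext1 i j
    rw [Matrix.of_apply, Matrix.one_apply, Hh, h i i.isLt]
    congr 1
    rw [Fin.ext_iff]
    apply propext
    omega
  rw [this, Matrix.det_one]

theorem jt_zero_pos (k : ℕ) (lam : ℕ → ℤ) (hk : 0 < k) (h : 0 < lam 0) : jt 0 k lam = 0 := by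
  unfold jt
  apply Matrix.det_eq_zero_of_row_eq_zero ⟨0, hk⟩
  intro j
  rw [Matrix.of_apply, Hh, if_neg]
  simp only [Nat.cast_zero]
  omega

theorem IsPartitionSeq.anti {k : ℕ} {lam : ℕ → ℤ} (hp : IsPartitionSeq k lam) (i j : ℕ)
    (hij : i ≤ j) (hj : j < k) : lam j ≤ lam i := by
  induction j, hij using Nat.le_induction with
  | base => exact le_rfl
  | succ j hij ih => exact (hp.1 j hj).trans (ih (by omega))

theorem SSYT.ext' {k : ℕ} {lam : ℕ → ℤ} {a b : ℕ} {S T : SSYT k lam a b}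
    (h : ∀ i j : ℕ, i < k → (j : ℤ) < lam i → S.entry i j = T.entry i j) : S = T := by
  have he : S.entry = T.entry := by
    funext i j
    by_cases hc : i < k ∧ (j : ℤ) < lam i
    · exact h i j hc.1 hc.2
    · rw [S.zero_outside i j hc, T.zero_outside i j hc]
  cases S; cases T; cases he; rfl

theorem SSYT.finite (k : ℕ) (lam : ℕ → ℤ) (a b : ℕ) : Finite (SSYT k lam a b) := by
  let F : SSYT k lam a b → (∀ i : Fin k, Fin (lam i).toNat → Fin (b + 1)) :=
    fun T i j => ⟨T.entry i j, Nat.lt_succ_of_le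
      (T.upper i j i.isLt (by have := j.isLt; omega))⟩
  apply Finite.of_injective F
  intro S T h
  apply SSYT.ext'
  intro i j hi hj
  have := congrFun (congrFun h ⟨i, hi⟩) ⟨j, by simp only; omega⟩
  simpa [F] using this

/-- `mu` is the shape of the entries of `T` that are at most `n`. -/
def Cut {k : ℕ} {lam : ℕ → ℤ} {n : ℕ} (T : SSYT k lam 1 (n + 1)) (mu : ℕ → ℤ) : Prop :=
  ∀ i j : ℕ, i < k → (j : ℤ) < lam i → ((j : ℤ) < mu i ↔ T.entry i j ≤ n)

/-- Interlacing. -/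
def Interl (k : ℕ) (lam mu : ℕ → ℤ) : Prop :=
  ∀ i < k, lowB k lam i ≤ mu i ∧ mu i ≤ lam i

theorem Interl.lam_le {k : ℕ} {lam mu : ℕ → ℤ} (hp : IsPartitionSeq k lam)
    (h : Interl k lam mu) (i₁ i₂ : ℕ) (h12 : i₁ < i₂) (h2 : i₂ < k) : lam i₂ ≤ mu i₁ := by
  have h3 := hp.anti (i₁ + 1) i₂ h12 h2
  have h4 := (h i₁ (by omega)).1
  rw [lowB, if_pos (by omega)] at h4
  omega

theorem Interl.isPartition {k : ℕ} {lam mu : ℕ → ℤ} (hp : IsPartitionSeq k lam)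
    (h : Interl k lam mu) : IsPartitionSeq k mu := by
  constructor
  · intro i hi
    have h1 := h.lam_le hp i (i + 1) (by omega) hi
    have h2 := (h (i + 1) hi).2
    omega
  · intro i hi
    have h4 := (h i hi).1
    unfold lowB at h4
    split_ifs at h4 with h5
    · have := hp.2 (i + 1) h5; omega
    · exact h4

/-- Removing the entries equal to `n + 1`. -/
def cutTab {k : ℕ} {lam : ℕ → ℤ} {n : ℕ} (T : SSYT k lam 1 (n + 1)) (mu : ℕ → ℤ)
    (hp : IsPartitionSeq k lam) (hm : Interl k lam mu) (hc : Cut T mu) : SSYT k mu 1 n where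
  entry i j := if i < k ∧ (j : ℤ) < mu i then T.entry i j else 0
  zero_outside i j h := if_neg h
  lower i j hi hj := by
    have := (hm i hi).2
    rw [if_pos ⟨hi, hj⟩]; exact T.lower i j hi (by omega)
  upper i j hi hj := by
    have := (hm i hi).2
    rw [if_pos ⟨hi, hj⟩]; exact (hc i j hi (by omega)).1 hj
  row_weak i j₁ j₂ hi hj hj2 := by
    have := (hm i hi).2
    rw [if_pos ⟨hi, by omega⟩, if_pos ⟨hi, hj2⟩]
    exact T.row_weak i j₁ j₂ hi hj (by omega)
  col_strict i₁ i₂ j h12 h2 hj := by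
    have := (hm i₂ h2).2
    have := hm.lam_le hp i₁ i₂ h12 h2
    rw [if_pos ⟨by omega, by omega⟩, if_pos ⟨h2, hj⟩]
    exact T.col_strict i₁ i₂ j h12 h2 (by omega)

/-- Filling the cells of `lam / mu` with `n + 1`. -/
def fillTab {k : ℕ} {lam : ℕ → ℤ} {n : ℕ} {mu : ℕ → ℤ} (T : SSYT k mu 1 n)
    (hp : IsPartitionSeq k lam) (hm : Interl k lam mu) : SSYT k lam 1 (n + 1) where
  entry i j := if i < k ∧ (j : ℤ) < mu i then T.entry i j
    else if i < k ∧ (j : ℤ) < lam i then n + 1 else 0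
  zero_outside i j h := by
    rw [if_neg, if_neg h]
    rintro ⟨hi, hj⟩
    have := (hm i hi).2
    exact h ⟨hi, by omega⟩
  lower i j hi hj := by
    split_ifs with h1 h2
    · exact T.lower i j hi h1.2
    · omega
    · exact absurd ⟨hi, hj⟩ h2
  upper i j hi hj := by
    split_ifs with h1 h2
    · have := T.upper i j hi h1.2; omega
    · omega
    · omega
  row_weak i j₁ j₂ hi hj hj2 := by
    by_cases h2 : (j₂ : ℤ) < mu i
    · rw [if_pos ⟨hi, by omega⟩, if_pos ⟨hi, h2⟩]
      exact T.row_weak i j₁ j₂ hi hj h2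
    · rw [if_neg (c := i < k ∧ (j₂ : ℤ) < mu i) (fun h => h2 h.2), if_pos (c := i < k ∧ (j₂ : ℤ) < lam i) ⟨hi, hj2⟩]
      split_ifs with h3 h4
      · have := T.upper i j₁ hi h3.2; omega
      · omega
      · omega
  col_strict i₁ i₂ j h12 h2 hj := by
    have h3 := hm.lam_le hp i₁ i₂ h12 h2
    rw [if_pos (c := i₁ < k ∧ (j : ℤ) < mu i₁) ⟨by omega, by omega⟩]
    split_ifs with h4 h5
    · exact T.col_strict i₁ i₂ j h12 h2 h4.2
    · have := T.upper i₁ j (by omega) (by omega); omega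
    · exact absurd ⟨h2, hj⟩ h5

theorem fillTab_cut {k : ℕ} {lam : ℕ → ℤ} {n : ℕ} {mu : ℕ → ℤ} (T : SSYT k mu 1 n)
    (hp : IsPartitionSeq k lam) (hm : Interl k lam mu) : Cut (fillTab T hp hm) mu := by
  intro i j hi hj
  simp only [fillTab]
  split_ifs with h1 h2
  · have := T.upper i j hi h1.2
    exact ⟨fun _ => this, fun _ => h1.2⟩
  · constructor
    · intro h; exact absurd ⟨hi, h⟩ h1
    · omega
  · exact absurd ⟨hi, hj⟩ h2

/-- The bijection of the branching rule. -/
def cutEquiv {k : ℕ} {lam : ℕ → ℤ} {n : ℕ} {mu : ℕ → ℤ}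
    (hp : IsPartitionSeq k lam) (hm : Interl k lam mu) :
    {T : SSYT k lam 1 (n + 1) // Cut T mu} ≃ SSYT k mu 1 n where
  toFun T := cutTab T.1 mu hp hm T.2
  invFun T := ⟨fillTab T hp hm, fillTab_cut T hp hm⟩
  left_inv := by
    rintro ⟨T, hT⟩
    apply Subtype.ext
    apply SSYT.ext'
    intro i j hi hj
    simp only [fillTab, cutTab]
    by_cases h : (j : ℤ) < mu i
    · rw [if_pos ⟨hi, h⟩, if_pos ⟨hi, h⟩]
    · rw [if_neg (fun h' => h h'.2), if_pos ⟨hi, hj⟩]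
      have h1 := T.upper i j hi hj
      have h2 := hT i j hi hj
      have : ¬ T.entry i j ≤ n := fun h3 => h (h2.2 h3)
      omega
  right_inv := by
    intro T
    apply SSYT.ext'
    intro i j hi hj
    simp only [fillTab, cutTab]
    rw [if_pos ⟨hi, hj⟩, if_pos ⟨hi, hj⟩]

theorem weight_cut {k : ℕ} {lam : ℕ → ℤ} {n : ℕ} {mu : ℕ → ℤ} (T : SSYT k lam 1 (n + 1))
    (hp : IsPartitionSeq k lam) (hm : Interl k lam mu) (hc : Cut T mu) :
    T.weight = (∏ i ∈ Finset.range k, MvPolynomial.X (n + 1) ^ (lam i - mu i).toNat) *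
      (cutTab T mu hp hm hc).weight := by
  unfold SSYT.weight
  rw [← Finset.prod_mul_distrib]
  apply Finset.prod_congr rfl
  intro i hi
  rw [Finset.mem_range] at hi
  have h1 := (hm i hi).2
  have h0 := (hm.isPartition hp).2 i hi
  rw [← Finset.prod_range_mul_prod_Ico _ (Int.toNat_le_toNat h1), mul_comm]
  congr 1
  · rw [Finset.prod_congr rfl (g := fun _ => MvPolynomial.X (n + 1))]
    · rw [Finset.prod_const, Nat.card_Ico]
      congr 1; omega
    · intro j hj
      rw [Finset.mem_Ico] at hj
      have h2 := T.upper i j hi (by omega)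
      have h3 := hc i j hi (by omega)
      have h4 : ¬ T.entry i j ≤ n := fun h => by have := h3.2 h; omega
      congr 1; omega
  · apply Finset.prod_congr rfl
    intro j hj
    rw [Finset.mem_range] at hj
    simp only [cutTab]
    rw [if_pos ⟨hi, by omega⟩]

theorem exists_cut {k : ℕ} {lam : ℕ → ℤ} {n : ℕ} (T : SSYT k lam 1 (n + 1))
    (hp : IsPartitionSeq k lam) :
    ∃ mu : Fin k → ℤ, Interl k lam (extZ k mu) ∧ Cut T (extZ k mu) := by
  have key : ∀ i : Fin k, ∃ m : ℤ, lowB k lam i ≤ m ∧ m ≤ lam i ∧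
      ∀ j : ℕ, (j : ℤ) < lam i → ((j : ℤ) < m ↔ T.entry i j ≤ n) := by
    intro i
    have hl := hp.2 i i.isLt
    have hex : ∃ j : ℕ, ¬ ((j : ℤ) < lam i ∧ T.entry i j ≤ n) :=
      ⟨(lam i).toNat, fun h => by omega⟩
    classical
    obtain ⟨m, hm1, hm2⟩ : ∃ m : ℕ, ¬ ((m : ℤ) < lam i ∧ T.entry i m ≤ n) ∧
        ∀ j < m, ((j : ℤ) < lam i ∧ T.entry i j ≤ n) :=
      ⟨Nat.find hex, Nat.find_spec hex, fun j hj => not_not.1 (Nat.find_min hex hj)⟩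
    refine ⟨m, ?_, ?_, ?_⟩
    · unfold lowB
      split_ifs with h
      · by_contra hlt
        have h1 := hp.1 i h
        have h2 := T.col_strict i (i + 1) m (by omega) h (by omega)
        have h3 := T.upper (i + 1) m h (by omega)
        exact hm1 ⟨by omega, by omega⟩
      · omega
    · by_contra hlt
      have := (hm2 (lam i).toNat (by omega)).1
      omega
    · intro j hj
      constructor
      · intro h; exact (hm2 j (by omega)).2
      · intro h
        by_contra hge
        have h1 := T.row_weak i m j i.isLt (by omega) hj
        exact hm1 ⟨by omega, by omega⟩
  choose mu h1 h2 h3 using key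
  refine ⟨mu, ?_, ?_⟩
  · intro i hi
    have := extZ_fin k mu ⟨i, hi⟩
    simp only at this
    rw [this]
    exact ⟨h1 ⟨i, hi⟩, h2 ⟨i, hi⟩⟩
  · intro i j hi hj
    have := extZ_fin k mu ⟨i, hi⟩
    simp only at this
    rw [this]
    exact h3 ⟨i, hi⟩ j hj

theorem cut_unique {k : ℕ} {lam : ℕ → ℤ} {n : ℕ} (T : SSYT k lam 1 (n + 1))
    (hp : IsPartitionSeq k lam) (mu mu' : Fin k → ℤ)
    (h1 : Interl k lam (extZ k mu)) (h2 : Cut T (extZ k mu))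
    (h1' : Interl k lam (extZ k mu')) (h2' : Cut T (extZ k mu')) : mu = mu' := by
  funext i
  have a1 := (h1 i i.isLt).2
  have a1' := (h1' i i.isLt).2
  have a0 := (h1.isPartition hp).2 i i.isLt
  have a0' := (h1'.isPartition hp).2 i i.isLt
  have b := fun j => h2 i j i.isLt
  have b' := fun j => h2' i j i.isLt
  simp only [extZ_fin] at a1 a1' a0 a0' b b'
  rcases lt_trichotomy (mu i) (mu' i) with h | h | h
  · have c := b (mu i).toNat (by omega)
    have c' := b' (mu i).toNat (by omega)
    rw [← c'] at c
    omega
  · exact h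
  · have c := b (mu' i).toNat (by omega)
    have c' := b' (mu' i).toNat (by omega)
    rw [← c'] at c
    omega

theorem mem_pi_iff {k : ℕ} {lam : ℕ → ℤ} (mu : Fin k → ℤ) :
    mu ∈ Fintype.piFinset (fun i : Fin k => Finset.Icc (lowB k lam i) (lam i)) ↔
      Interl k lam (extZ k mu) := by
  rw [Fintype.mem_piFinset]
  constructor
  · intro h i hi
    have := h ⟨i, hi⟩
    have e := extZ_fin k mu ⟨i, hi⟩
    simp only at e
    rw [e]
    exact Finset.mem_Icc.1 this
  · intro h i
    have := h i i.isLt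
    rw [extZ_fin] at this
    exact Finset.mem_Icc.2 this

theorem schur_eq (k : ℕ) (lam : ℕ → ℤ) (a b : ℕ) (hp : IsPartitionSeq k lam) :
    schur k lam a b = ∑ᶠ T : SSYT k lam a b, T.weight := by
  unfold schur
  exact if_pos hp

theorem schur_step (n k : ℕ) (lam : ℕ → ℤ) (hp : IsPartitionSeq k lam) :
    schur k lam 1 (n + 1) =
      ∑ mu ∈ Fintype.piFinset (fun i : Fin k => Finset.Icc (lowB k lam i) (lam i)),
        (∏ i : Fin k, MvPolynomial.X (n + 1) ^ (lam i - mu i).toNat) *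
          schur k (extZ k mu) 1 n := by
  classical
  rw [schur_eq _ _ _ _ hp]
  haveI := SSYT.finite k lam 1 (n + 1)
  letI := Fintype.ofFinite (SSYT k lam 1 (n + 1))
  rw [finsum_eq_sum_of_fintype]
  choose sh hsh1 hsh2 using fun T : SSYT k lam 1 (n + 1) => exists_cut T hp
  rw [← Finset.sum_fiberwise_of_maps_to (g := sh) (t := Fintype.piFinset
    (fun i : Fin k => Finset.Icc (lowB k lam i) (lam i)))
    (fun T _ => (mem_pi_iff _).2 (hsh1 T))]
  apply Finset.sum_congr rfl
  intro mu hmu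
  rw [mem_pi_iff] at hmu
  haveI := SSYT.finite k (extZ k mu) 1 n
  letI := Fintype.ofFinite (SSYT k (extZ k mu) 1 n)
  rw [schur_eq _ _ _ _ (hmu.isPartition hp), finsum_eq_sum_of_fintype]
  rw [Finset.sum_subtype (p := fun T => Cut T (extZ k mu))]
  · rw [← Equiv.sum_comp (cutEquiv hp hmu), Finset.mul_sum]
    apply Finset.sum_congr rfl
    rintro ⟨T, hT⟩ _
    rw [weight_cut T hp hmu hT, Finset.prod_range]
    simp only [extZ_fin]
    rfl
  · intro T
    simp only [Finset.mem_filter, Finset.mem_univ, true_and]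
    constructor
    · rintro rfl; exact hsh2 T
    · intro h; exact cut_unique T hp _ _ (hsh1 T) (hsh2 T) hmu h

theorem jacobi_trudi (n k : ℕ) (lam : ℕ → ℤ) (hp : IsPartitionSeq k lam) :
    schur k lam 1 n = jt n k lam := by
  induction n generalizing lam with
  | zero =>
    rw [schur_eq _ _ _ _ hp]
    by_cases h : 0 < k ∧ 0 < lam 0
    · rw [jt_zero_pos k lam h.1 h.2]
      haveI : IsEmpty (SSYT k lam 1 0) := ⟨fun T => by
        have h1 := T.lower 0 0 h.1 (by simpa using h.2)
        have h2 := T.upper 0 0 h.1 (by simpa using h.2)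
        omega⟩
      exact finsum_of_isEmpty _
    · have hz : ∀ i < k, lam i = 0 := by
        intro i hi
        have h1 := hp.2 i hi
        have h2 := hp.anti 0 i (by omega) hi
        have h3 : ¬ 0 < lam 0 := fun h3 => h ⟨by omega, h3⟩
        omega
      rw [jt_zero_zero k lam hz]
      let T0 : SSYT k lam 1 0 :=
        { entry := fun _ _ => 0
          zero_outside := fun _ _ _ => rfl
          lower := fun i j hi hj => by have := hz i hi; omega
          upper := fun i j hi hj => le_rfl
          row_weak := fun _ _ _ _ _ _ => le_rfl
          col_strict := fun i₁ i₂ j _ hi hj => by have := hz i₂ hi; omega }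
      rw [finsum_eq_single _ T0]
      · unfold SSYT.weight
        apply Finset.prod_eq_one
        intro i hi
        rw [hz i (Finset.mem_range.1 hi)]
        simp
      · intro T hT
        exfalso; apply hT
        apply SSYT.ext'
        intro i j hi hj
        have := hz i hi; omega
  | succ n ih =>
    rw [schur_step n k lam hp, jt_step n k lam hp]
    apply Finset.sum_congr rfl
    intro mu hmu
    rw [mem_pi_iff] at hmu
    rw [ih _ (hmu.isPartition hp)]

/-- the Fulmek–Kleber identity: for a partition
`ν = (ν_1 ≥ … ≥ ν_{k+1} ≥ 0)` with `k ≥ 1` and any `n ≥ 1`: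
`s^{[n]}_{(ν_1,…,ν_k)} · s^{[n]}_{(ν_2,…,ν_{k+1})}
 = s^{[n]}_{(ν_2,…,ν_k)} · s^{[n]}_{(ν_1,…,ν_{k+1})}
 + s^{[n]}_{(ν_2-1,…,ν_{k+1}-1)} · s^{[n]}_{(ν_1+1,…,ν_k+1)}`,
with `s^{[n]}_α = 0` when `α` is not a partition (built into `schur`). -/
theorem stmt_17 (k n : ℕ) (hk : 1 ≤ k) (hn : 1 ≤ n) (nu : ℕ → ℤ)
    (hdec : ∀ i, i + 1 < k + 1 → nu (i + 1) ≤ nu i) (hpos : ∀ i, i < k + 1 → 0 ≤ nu i) :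
    schur k nu 1 n * schur k (fun i => nu (i + 1)) 1 n =
      schur (k - 1) (fun i => nu (i + 1)) 1 n * schur (k + 1) nu 1 n +
        schur k (fun i => nu (i + 1) - 1) 1 n * schur k (fun i => nu i + 1) 1 n := by
  obtain ⟨m, rfl⟩ : ∃ m, k = m + 1 := ⟨k - 1, by omega⟩
  have hd := desnanot_jacobi
    (Matrix.of fun i j : Fin (m + 2) => Hh n (nu i - i + j))
  have p1 : IsPartitionSeq (m + 1) nu :=
    ⟨fun i hi => hdec i (by omega), fun i hi => hpos i (by omega)⟩
  have p2 : IsPartitionSeq (m + 1) (fun i => nu (i + 1)) :=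
    ⟨fun i hi => hdec (i + 1) (by omega), fun i hi => hpos (i + 1) (by omega)⟩
  have p3 : IsPartitionSeq m (fun i => nu (i + 1)) :=
    ⟨fun i hi => hdec (i + 1) (by omega), fun i hi => hpos (i + 1) (by omega)⟩
  have p4 : IsPartitionSeq (m + 2) nu :=
    ⟨fun i hi => hdec i (by omega), fun i hi => hpos i (by omega)⟩
  have p5 : IsPartitionSeq (m + 1) (fun i => nu i + 1) :=
    ⟨fun i hi => by have := hdec i (by omega); simp only; omega,
      fun i hi => by have := hpos i (by omega); simp only; omega⟩
  have e1 : schur (m + 1) nu 1 n = ((Matrix.of fun i j : Fin (m + 2) =>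
      Hh n (nu i - i + j)).submatrix Fin.castSucc Fin.castSucc).det := by
    rw [jacobi_trudi _ _ _ p1]; rfl
  have e2 : schur (m + 1) (fun i => nu (i + 1)) 1 n = ((Matrix.of fun i j : Fin (m + 2) =>
      Hh n (nu i - i + j)).submatrix Fin.succ Fin.succ).det := by
    rw [jacobi_trudi _ _ _ p2]
    unfold jt
    congr 1; ext1 i j
    simp only [Matrix.of_apply, Matrix.submatrix_apply, Fin.val_succ]
    congr 1; push_cast; ring
  have e3 : schur m (fun i => nu (i + 1)) 1 n = ((Matrix.of fun i j : Fin (m + 2) =>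
      Hh n (nu i - i + j)).submatrix (fun i : Fin m => i.castSucc.succ)
        (fun i : Fin m => i.castSucc.succ)).det := by
    rw [jacobi_trudi _ _ _ p3]
    unfold jt
    congr 1; ext1 i j
    simp only [Matrix.of_apply, Matrix.submatrix_apply, Fin.val_succ, Fin.val_castSucc]
    congr 1; push_cast; ring
  have e4 : schur (m + 2) nu 1 n = (Matrix.of fun i j : Fin (m + 2) =>
      Hh n (nu i - i + j)).det := jacobi_trudi _ _ _ p4
  have e5 : schur (m + 1) (fun i => nu i + 1) 1 n = ((Matrix.of fun i j : Fin (m + 2) =>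
      Hh n (nu i - i + j)).submatrix Fin.castSucc Fin.succ).det := by
    rw [jacobi_trudi _ _ _ p5]
    unfold jt
    congr 1; ext1 i j
    simp only [Matrix.of_apply, Matrix.submatrix_apply, Fin.val_succ, Fin.val_castSucc]
    congr 1; push_cast; ring
  have e6 : schur (m + 1) (fun i => nu (i + 1) - 1) 1 n = ((Matrix.of fun i j : Fin (m + 2) =>
      Hh n (nu i - i + j)).submatrix Fin.succ Fin.castSucc).det := by
    by_cases h : 1 ≤ nu (m + 1)
    · have p6 : IsPartitionSeq (m + 1) (fun i => nu (i + 1) - 1) :=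
        ⟨fun i hi => by have := hdec (i + 1) (by omega); simp only; omega,
          fun i hi => by have := p4.anti (i + 1) (m + 1) (by omega) (by omega); simp only; omega⟩
      rw [jacobi_trudi _ _ _ p6]
      unfold jt
      congr 1; ext1 i j
      simp only [Matrix.of_apply, Matrix.submatrix_apply, Fin.val_succ, Fin.val_castSucc]
      congr 1; push_cast; ring
    · have p6 : ¬ IsPartitionSeq (m + 1) (fun i => nu (i + 1) - 1) := fun hq => by
        have := hq.2 m (by omega)
        simp only at this; omega
      have hz : schur (m + 1) (fun i => nu (i + 1) - 1) 1 n = 0 := by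
        unfold schur; exact if_neg p6
      rw [hz]
      symm
      apply Matrix.det_eq_zero_of_row_eq_zero (Fin.last m)
      intro j
      simp only [Matrix.of_apply, Matrix.submatrix_apply, Fin.val_succ, Fin.val_castSucc,
        Fin.val_last]
      apply Hh_neg
      have := j.isLt
      push_cast
      omega
  rw [e1, e2, e5, e6, Nat.add_sub_cancel, e3, e4]
  exact hd
end

section
/- Let λ = (λ_1,…,λ_k) and μ = (μ_1,…,μ_{k−1}) be partitions that interlace, i.e., λ_i ≥ μ_i ≥ λ_{i+1} for all 1 ≤ i ≤ k−1. For 1 ≤ i ≤ k define integer sequences λ^i = (λ^i_1,…,λ^i_k) and μ^i = (μ^i_1,…,μ^i_{k−1}) by λ^i_j := μ_j − 1 if j < i, λ^i_i := λ_i, λ^i_j := μ_{j−1} if j > i; and μ^i_j := λ_j + 1 if j < i, μ^i_j := λ_{j+1} if j ≥ i. Then for every n ≥ 1, as polynomials in x_1,…,x_n: s^{[n]}_λ · s^{[n]}_μ = Σ_{i=1}^{k} s^{[n]}_{λ^i} · s^{[n]}_{μ^i}, where s^{[n]}_α := 0 if the sequence α is not a partition. -/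
namespace JTrudi

open Finset MvPolynomial

/-- complete homogeneous polynomials in `x_1,…,x_n` -/
noncomputable def h : ℕ → ℤ → MvPolynomial ℕ ℤ
  | 0, m => if m = 0 then 1 else 0
  | n + 1, m => ∑ t ∈ range (m.toNat + 1), X (n + 1) ^ t * h n (m - t)

lemma h_neg (n : ℕ) (m : ℤ) (hm : m < 0) : h n m = 0 := by
  induction n generalizing m with
  | zero => simp [h]; omega
  | succ n ih =>
    rw [h]
    apply Finset.sum_eq_zero
    intro t _
    rw [ih _ (by omega), mul_zero]

lemma h_rec (n : ℕ) (m : ℤ) : h (n + 1) m = h n m + X (n + 1) * h (n + 1) (m - 1) := by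
  by_cases hm : m < 0
  · rw [h_neg _ _ hm, h_neg _ _ hm, h_neg _ (m-1) (by omega)]; simp
  · rw [h, Finset.sum_range_succ']
    by_cases h0 : m = 0
    · subst h0
      rw [h_neg (n+1) _ (by omega)]; simp
    · rw [h, Finset.mul_sum, add_comm]
      have e : m.toNat = (m - 1).toNat + 1 := by omega
      rw [e]
      congr 1
      · simp
      · apply Finset.sum_congr rfl
        intro t _
        rw [pow_succ']
        push_cast
        rw [mul_assoc, show m - 1 - (t:ℤ) = m - (t + 1) by ring]

lemma h_tele (n : ℕ) (m : ℤ) (d : ℕ) :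
    h (n + 1) m = ∑ t ∈ range d, X (n + 1) ^ t * h n (m - t)
      + X (n + 1) ^ d * h (n + 1) (m - d) := by
  induction d with
  | zero => simp
  | succ d ih =>
    rw [Finset.sum_range_succ, ih, h_rec n (m - d)]
    push_cast
    rw [show m - ((d:ℤ) + 1) = m - d - 1 by ring]
    ring

/-- Jacobi–Trudi matrix -/
noncomputable def J (k n : ℕ) (q : ℕ → ℤ) : Matrix (Fin k) (Fin k) (MvPolynomial ℕ ℤ) :=
  Matrix.of fun i j => h n (q i - (i : ℕ) + (j : ℕ))

lemma det_row_op {k : ℕ} {R : Type*} [CommRing R] (A B : Matrix (Fin k) (Fin k) R)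
    (c : Fin k → R)
    (hs : ∀ (i j : Fin k) (hi : (i : ℕ) + 1 < k), A i j = B i j + c i * A ⟨i + 1, hi⟩ j)
    (hl : ∀ (i j : Fin k), (i : ℕ) + 1 = k → A i j = B i j) : A.det = B.det := by
  cases k with
  | zero => simp
  | succ k =>
    rw [← Matrix.det_submatrix_equiv_self Fin.revPerm A,
      ← Matrix.det_submatrix_equiv_self Fin.revPerm B]
    apply Matrix.det_eq_of_forall_row_eq_smul_add_pred (fun i : Fin k => c (Fin.rev i.succ))
    · intro j
      simp only [Matrix.submatrix_apply, Fin.revPerm_apply]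
      apply hl
      simp
    · intro i j
      simp only [Matrix.submatrix_apply, Fin.revPerm_apply]
      rw [hs _ _ (by simp only [Fin.val_rev, Fin.val_succ]; omega)]
      congr 3
      apply Fin.ext
      simp only [Fin.val_rev, Fin.val_succ, Fin.val_castSucc]; omega

/-- extension by zero -/
def ext {k : ℕ} (p : Fin k → ℕ) : ℕ → ℕ := fun i => if hi : i < k then p ⟨i, hi⟩ else 0

lemma ext_apply {k : ℕ} (p : Fin k → ℕ) (i : Fin k) : ext p i = p i := by simp [ext]

/-- interlacing shapes -/
def il (k : ℕ) (p : ℕ → ℕ) : Finset (Fin k → ℕ) :=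
  Fintype.piFinset fun i : Fin k => Icc (p (i + 1)) (p i)

lemma det_branch (k n : ℕ) (p : ℕ → ℕ) (hp : ∀ i, p (i + 1) ≤ p i) (h0 : ∀ i, k ≤ i → p i = 0) :
    (J k (n + 1) (fun i => p i)).det =
      ∑ v ∈ il k p, (J k n (fun i => ext v i)).det *
        X (n + 1) ^ (∑ i : Fin k, (p i - v i)) := by
  have h1 : (J k (n + 1) (fun i => p i)).det = (Matrix.of fun i j : Fin k =>
      (∑ t ∈ Icc (p (i + 1)) (p i), fun j : Fin k => X (n + 1) ^ (p i - t) *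
        h n ((t : ℤ) - (i : ℕ) + (j : ℕ))) j).det := by
    have key : ∀ i j : Fin k, h (n + 1) ((p i : ℤ) - (i : ℕ) + (j : ℕ)) =
      (∑ t ∈ Icc (p (i + 1)) (p i), X (n + 1) ^ (p i - t) *
        h n ((t : ℤ) - (i : ℕ) + (j : ℕ)))
       + X (n + 1) ^ (p i - p (i + 1) + 1) *
          h (n + 1) ((p (i + 1) : ℤ) - ((i : ℕ) + 1) + (j : ℕ)) := by
      intro i j
      have hpi := hp i
      rw [h_tele n _ (p i - p (i + 1) + 1)]
      congr 1
      · refine Finset.sum_bij' (fun t _ => p i - t) (fun t _ => p i - t) ?_ ?_ ?_ ?_ ?_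
        · intro t ht; simp at ht ⊢; omega
        · intro t ht; simp at ht ⊢; omega
        · intro t ht; simp at ht ⊢; omega
        · intro t ht; simp at ht ⊢; omega
        · intro t ht
          simp only [mem_range] at ht
          rw [Nat.sub_sub_self (by omega)]
          congr 2
          push_cast [show t ≤ p i by omega]; ring
      · congr 2
        push_cast [hpi]; ring
    apply det_row_op _ _ (fun i => X (n + 1) ^ (p i - p (i + 1) + 1))
    · intro i j hi
      simp only [J, Matrix.of_apply, Finset.sum_apply]
      rw [key]
      push_cast
      rfl
    · intro i j hi
      simp only [J, Matrix.of_apply, Finset.sum_apply]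
      rw [key, h_neg (n + 1) (_ - _ + _)]
      · simp
      · rw [h0 _ (by omega)]
        have := j.2
        push_cast
        omega
  rw [h1]
  have h2 := MultilinearMap.map_sum_finset (Matrix.detRowAlternating (n := Fin k)
    (R := MvPolynomial ℕ ℤ)).toMultilinearMap
    (fun (i : Fin k) (t : ℕ) => fun j : Fin k => X (n + 1) ^ (p i - t) *
        h n ((t : ℤ) - (i : ℕ) + (j : ℕ))) (fun i : Fin k => Icc (p (i + 1)) (p i))
  refine Eq.trans ?_ (h2.trans ?_)
  · rfl
  · apply Finset.sum_congr rfl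
    intro v _
    have h3 := Matrix.det_mul_column (fun i : Fin k => (X (n + 1) : MvPolynomial ℕ ℤ) ^ (p i - v i))
      (J k n (fun i => ext v i))
    rw [Finset.prod_pow_eq_pow_sum] at h3
    rw [mul_comm, ← h3]
    simp only [J, Matrix.of_apply, ext_apply]
    rfl

/-- tableau predicate -/
structure Tab (p : ℕ → ℕ) (n : ℕ) (e : ℕ → ℕ → ℕ) : Prop where
  out : ∀ i j, p i ≤ j → e i j = 0
  lo : ∀ i j, j < p i → 1 ≤ e i j
  up : ∀ i j, j < p i → e i j ≤ n
  row : ∀ i j₁ j₂, j₁ ≤ j₂ → j₂ < p i → e i j₁ ≤ e i j₂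
  col : ∀ i₁ i₂ j, i₁ < i₂ → j < p i₂ → e i₁ j < e i₂ j

lemma anti {p : ℕ → ℕ} (hp : ∀ i, p (i + 1) ≤ p i) {i j : ℕ} (hij : i ≤ j) : p j ≤ p i :=
  antitone_nat_of_succ_le hp hij

lemma tab_finite (k n : ℕ) (p : ℕ → ℕ) (hp : ∀ i, p (i + 1) ≤ p i) (h0 : ∀ i, k ≤ i → p i = 0) :
    {e | Tab p n e}.Finite := by
  let F : (ℕ → ℕ → ℕ) → (Fin k → Fin (p 0) → Fin (n + 1)) := fun e i j =>
    ⟨min (e i j) n, by omega⟩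
  apply Set.Finite.of_finite_image (f := F) (Set.toFinite _)
  intro e he e' he' hee
  simp only [Set.mem_ofPred_eq] at he he'
  funext i j
  by_cases hj : j < p i
  · have hi : i < k := by
      by_contra hc
      rw [h0 i (by omega)] at hj; omega
    have hj0 : j < p 0 := lt_of_lt_of_le hj (anti hp (Nat.zero_le i))
    have := congrFun (congrFun hee ⟨i, hi⟩) ⟨j, hj0⟩
    simp only [F, Fin.mk.injEq] at this
    rw [min_eq_left (he.up i j hj), min_eq_left (he'.up i j hj)] at this
    exact this
  · rw [he.out i j (by omega), he'.out i j (by omega)]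

open Classical in
/-- finset of tableaux -/
noncomputable def tabs (p : ℕ → ℕ) (n : ℕ) : Finset (ℕ → ℕ → ℕ) :=
  if hf : {e | Tab p n e}.Finite then hf.toFinset else ∅

lemma mem_tabs (k n : ℕ) (p : ℕ → ℕ) (hp : ∀ i, p (i + 1) ≤ p i) (h0 : ∀ i, k ≤ i → p i = 0)
    (e : ℕ → ℕ → ℕ) : e ∈ tabs p n ↔ Tab p n e := by
  rw [tabs, dif_pos (tab_finite k n p hp h0)]; simp

/-- weight -/
noncomputable def w (k : ℕ) (p : ℕ → ℕ) (e : ℕ → ℕ → ℕ) : MvPolynomial ℕ ℤ :=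
  ∏ i ∈ range k, ∏ j ∈ range (p i), X (e i j)

/-- number of entries at most `n` in row `i` -/
def sh (n : ℕ) (p : ℕ → ℕ) (e : ℕ → ℕ → ℕ) (i : ℕ) : ℕ := #{j ∈ range (p i) | e i j ≤ n}

lemma sh_le (n : ℕ) (p : ℕ → ℕ) (e : ℕ → ℕ → ℕ) (i : ℕ) : sh n p e i ≤ p i := by
  simpa [sh] using card_filter_le (range (p i)) (fun j => e i j ≤ n)

lemma lt_sh (n m : ℕ) (p : ℕ → ℕ) (e : ℕ → ℕ → ℕ) (he : Tab p m e) (i j : ℕ) :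
    j < sh n p e i ↔ j < p i ∧ e i j ≤ n := by
  constructor
  · intro hj
    have hjp : j < p i := lt_of_lt_of_le hj (sh_le n p e i)
    refine ⟨hjp, ?_⟩
    by_contra hc
    have : ({j ∈ range (p i) | e i j ≤ n} : Finset ℕ) ⊆ range j := by
      intro j' hj'
      simp only [mem_filter, mem_range] at hj' ⊢
      by_contra hcc
      have := he.row i j j' (by omega) hj'.1
      omega
    have := card_le_card this
    rw [card_range] at this
    rw [sh] at hj
    omega
  · rintro ⟨hj, hn⟩
    have : range (j + 1) ⊆ ({j ∈ range (p i) | e i j ≤ n} : Finset ℕ) := by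
      intro j' hj'
      simp only [mem_filter, mem_range] at hj' ⊢
      have := he.row i j' j (by omega) hj
      omega
    have := card_le_card this
    rw [card_range] at this
    rw [sh]
    omega

/-- remove the entries exceeding `n` -/
def trunc (n : ℕ) (e : ℕ → ℕ → ℕ) : ℕ → ℕ → ℕ := fun i j => if e i j ≤ n then e i j else 0

/-- fill the remaining cells with `n+1` -/
def glue (n : ℕ) (p v : ℕ → ℕ) (e : ℕ → ℕ → ℕ) : ℕ → ℕ → ℕ := fun i j =>
  if j < v i then e i j else if j < p i then n + 1 else 0

lemma il_prop {k : ℕ} {p : ℕ → ℕ} (h0 : ∀ i, k ≤ i → p i = 0) {v : Fin k → ℕ} (hv : v ∈ il k p) (i : ℕ) :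
    p (i + 1) ≤ ext v i ∧ ext v i ≤ p i := by
  by_cases hi : i < k
  · have := (Fintype.mem_piFinset.1 hv) ⟨i, hi⟩
    simpa [ext, hi] using this
  · simp [ext, hi, h0 (i + 1) (by omega)]

lemma il_part {k : ℕ} {p : ℕ → ℕ} (h0 : ∀ i, k ≤ i → p i = 0) {v : Fin k → ℕ} (hv : v ∈ il k p) :
    (∀ i, ext v (i + 1) ≤ ext v i) ∧ (∀ i, k ≤ i → ext v i = 0) :=
  ⟨fun i => (il_prop h0 hv (i + 1)).2.trans (il_prop h0 hv i).1,
    fun i hi => by simp [ext, show ¬ i < k by omega]⟩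

lemma ext_sh {k : ℕ} (n : ℕ) (p : ℕ → ℕ) (e : ℕ → ℕ → ℕ) (h0 : ∀ i, k ≤ i → p i = 0) :
    ext (fun i : Fin k => sh n p e i) = sh n p e := by
  funext i
  by_cases hi : i < k
  · simp [ext, hi]
  · have := sh_le n p e i
    rw [h0 i (by omega)] at this
    simp [ext, hi]; omega

lemma sh_mem (k n : ℕ) (p : ℕ → ℕ) (hp : ∀ i, p (i + 1) ≤ p i)
    (e : ℕ → ℕ → ℕ) (he : Tab p (n + 1) e) : (fun i : Fin k => sh n p e i) ∈ il k p := by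
  rw [il, Fintype.mem_piFinset]
  intro i
  rw [mem_Icc]
  refine ⟨?_, sh_le n p e i⟩
  by_contra hc
  push Not at hc
  have h1 : sh n p e i < p i := lt_of_lt_of_le hc (hp i)
  have h2 := lt_sh n (n + 1) p e he i (sh n p e i)
  have h3 := he.col i (i + 1) _ (by omega) hc
  have h4 := he.up (i + 1) _ hc
  have := h2.2 ⟨h1, by omega⟩
  omega

lemma trunc_tab (n : ℕ) (p : ℕ → ℕ) (e : ℕ → ℕ → ℕ) (hp : ∀ i, p (i + 1) ≤ p i)
    (he : Tab p (n + 1) e) : Tab (sh n p e) n (trunc n e) := by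
  have L := lt_sh n (n + 1) p e he
  constructor
  · intro i j hj
    by_cases hjp : j < p i
    · have : ¬ e i j ≤ n := fun hh => by have := (L i j).2 ⟨hjp, hh⟩; omega
      simp [trunc, this]
    · simp [trunc, he.out i j (by omega)]
  · intro i j hj
    have := (L i j).1 hj
    simp only [trunc, this.2, if_true]
    exact he.lo i j this.1
  · intro i j hj
    have := (L i j).1 hj
    simp only [trunc, this.2, if_true]
  · intro i j₁ j₂ h12 h2
    have h2' := (L i j₂).1 h2
    have h1' := (L i j₁).1 (by omega)
    simp only [trunc, h1'.2, h2'.2, if_true]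
    exact he.row i _ _ h12 h2'.1
  · intro i₁ i₂ j h12 h2
    have h2' := (L i₂ j).1 h2
    have := he.col i₁ i₂ j h12 h2'.1
    simp only [trunc, h2'.2, if_true, show e i₁ j ≤ n by omega]
    exact this

lemma glue_tab (n : ℕ) (p v : ℕ → ℕ) (e : ℕ → ℕ → ℕ) (hp : ∀ i, p (i + 1) ≤ p i)
    (hv : ∀ i, p (i + 1) ≤ v i ∧ v i ≤ p i)
    (he : Tab v n e) : Tab p (n + 1) (glue n p v e) := by
  constructor
  · intro i j hj
    have := (hv i).2
    simp [glue, show ¬ j < v i by omega, show ¬ j < p i by omega]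
  · intro i j hj
    simp only [glue]
    split_ifs with h1
    · exact he.lo i j h1
    · omega
  · intro i j hj
    simp only [glue]
    split_ifs with h1
    · have := he.up i j h1
      omega
    · omega
  · intro i j₁ j₂ h12 h2
    simp only [glue]
    by_cases hh : j₂ < v i
    · simp only [hh, show j₁ < v i by omega, if_true]
      exact he.row i _ _ h12 hh
    · simp only [hh, if_false, h2, if_true]
      split_ifs with h3
      · have := he.up i _ h3
        omega
      · omega
      · omega
  · intro i₁ i₂ j h12 h2
    have hj : j < v i₁ := lt_of_lt_of_le h2 ((anti hp (show i₁ + 1 ≤ i₂ by omega)).trans (hv i₁).1)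
    simp only [glue, hj, if_true, h2]
    split_ifs with h3
    · exact he.col _ _ _ h12 h3
    · have := he.up _ _ hj
      omega

lemma glue_trunc (n : ℕ) (p : ℕ → ℕ) (e : ℕ → ℕ → ℕ)
    (he : Tab p (n + 1) e) : glue n p (sh n p e) (trunc n e) = e := by
  have L := lt_sh n (n + 1) p e he
  funext i j
  simp only [glue]
  split_ifs with h1 h2
  · simp [trunc, ((L i j).1 h1).2]
  · have : ¬ e i j ≤ n := fun hh => h1 ((L i j).2 ⟨h2, hh⟩)
    have := he.up i j h2
    omega
  · exact (he.out i j (by omega)).symm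

lemma trunc_glue (n : ℕ) (p v : ℕ → ℕ) (e : ℕ → ℕ → ℕ) (he : Tab v n e) :
    trunc n (glue n p v e) = e := by
  funext i j
  simp only [trunc, glue]
  by_cases h1 : j < v i
  · simp [h1, he.up i j h1]
  · have := he.out i j (by omega)
    by_cases h2 : j < p i <;> simp [h1, h2, this]

lemma sh_glue (n : ℕ) (p v : ℕ → ℕ) (e : ℕ → ℕ → ℕ) (hv : ∀ i, v i ≤ p i) (he : Tab v n e) :
    sh n p (glue n p v e) = v := by
  funext i
  have : ({j ∈ range (p i) | glue n p v e i j ≤ n} : Finset ℕ) = range (v i) := by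
    ext j
    rw [mem_filter, mem_range, mem_range]
    simp only [glue]
    have := hv i
    have := he.up i j
    split_ifs with h1 h2
    · constructor
      · intro; assumption
      · intro; constructor
        · omega
        · exact this h1
    · omega
    · omega
  rw [sh, this, card_range]

lemma w_glue (k n : ℕ) (p v : ℕ → ℕ) (e : ℕ → ℕ → ℕ) (hv : ∀ i, v i ≤ p i) :
    w k p (glue n p v e) = w k v e * X (n + 1) ^ (∑ i : Fin k, (p i - v i)) := by
  rw [Fin.sum_univ_eq_sum_range (fun i => p i - v i) k, ← Finset.prod_pow_eq_pow_sum, w, w,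
    ← Finset.prod_mul_distrib]
  apply Finset.prod_congr rfl
  intro i _
  rw [← Finset.prod_range_mul_prod_Ico _ (hv i)]
  congr 1
  · apply Finset.prod_congr rfl
    intro j hj
    simp only [mem_range] at hj
    simp [glue, hj]
  · rw [Finset.prod_congr rfl (g := fun _ => X (n + 1))]
    · simp
    · intro j hj
      simp only [mem_Ico] at hj
      simp [glue, hj, show ¬ j < v i by omega]

lemma tab_branch (k n : ℕ) (p : ℕ → ℕ) (hp : ∀ i, p (i + 1) ≤ p i) (h0 : ∀ i, k ≤ i → p i = 0) :
    ∑ e ∈ tabs p (n + 1), w k p e =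
      ∑ v ∈ il k p, (∑ e ∈ tabs (ext v) n, w k (ext v) e) *
        X (n + 1) ^ (∑ i : Fin k, (p i - v i)) := by
  simp_rw [Finset.sum_mul]
  rw [Finset.sum_sigma']
  refine Finset.sum_bij' (fun e _ => ⟨fun i : Fin k => sh n p e i, trunc n e⟩)
    (fun x _ => glue n p (ext x.1) x.2) ?_ ?_ ?_ ?_ ?_
  · intro e he
    rw [mem_tabs k _ p hp h0] at he
    have hm := sh_mem k n p hp e he
    have hq := il_part h0 hm
    rw [mem_sigma]
    refine ⟨hm, ?_⟩
    rw [mem_tabs k _ _ hq.1 hq.2, ext_sh n p e h0]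
    exact trunc_tab n p e hp he
  · rintro ⟨v, e⟩ hx
    rw [mem_sigma] at hx
    obtain ⟨hv, he⟩ := hx
    have hq := il_part h0 hv
    rw [mem_tabs k _ _ hq.1 hq.2] at he
    rw [mem_tabs k _ p hp h0]
    exact glue_tab n p _ e hp (il_prop h0 hv) he
  · intro e he
    rw [mem_tabs k _ p hp h0] at he
    simp only
    rw [ext_sh n p e h0, glue_trunc n p e he]
  · rintro ⟨v, e⟩ hx
    rw [mem_sigma] at hx
    obtain ⟨hv, he⟩ := hx
    have hq := il_part h0 hv
    rw [mem_tabs k _ _ hq.1 hq.2] at he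
    simp only at he ⊢
    rw [trunc_glue n p _ e he, sh_glue n p _ e (fun i => (il_prop h0 hv i).2) he]
    simp only [ext_apply]
  · intro e he
    rw [mem_tabs k _ p hp h0] at he
    simp only
    have := w_glue k n p (sh n p e) (trunc n e) (sh_le n p e)
    rw [glue_trunc n p e he] at this
    rw [this, ext_sh n p e h0]

lemma jt (k n : ℕ) (p : ℕ → ℕ) (hp : ∀ i, p (i + 1) ≤ p i) (h0 : ∀ i, k ≤ i → p i = 0) :
    ∑ e ∈ tabs p n, w k p e = (J k n (fun i => p i)).det := by
  induction n generalizing p with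
  | succ n ih =>
    rw [tab_branch k n p hp h0, det_branch k n p hp h0]
    apply Finset.sum_congr rfl
    intro v hv
    have hq := il_part h0 hv
    rw [ih _ hq.1 hq.2]
  | zero =>
    by_cases hz : p 0 = 0
    · have hz' : ∀ i, p i = 0 := fun i => by
        have := anti hp (Nat.zero_le i); omega
      have : tabs p 0 = {fun _ _ => 0} := by
        ext e
        rw [mem_tabs k _ p hp h0, mem_singleton]
        constructor
        · intro he
          funext i j
          exact he.out i j (by rw [hz' i]; omega)
        · rintro rfl
          constructor <;> simp [hz']
      rw [this, sum_singleton]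
      have h1 : J k 0 (fun i => p i) = 1 := by
        ext1 i j
        simp only [J, h, Matrix.of_apply, hz', Matrix.one_apply, Fin.ext_iff]
        congr 1
        simp only [eq_iff_iff]
        omega
      rw [h1]
      simp [w, hz']
    · have hk : 0 < k := by
        by_contra hc
        exact hz (h0 0 (by omega))
      have : tabs p 0 = ∅ := by
        ext e
        rw [mem_tabs k _ p hp h0]
        simp only [notMem_empty, iff_false]
        intro he
        have := he.up 0 0 (by omega)
        have := he.lo 0 0 (by omega)
        omega
      rw [this, sum_empty]
      symm
      apply Matrix.det_eq_zero_of_row_eq_zero ⟨0, hk⟩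
      intro j
      simp only [J, h, Matrix.of_apply]
      rw [if_neg (by omega)]

lemma schur_eq (k n : ℕ) (q : ℕ → ℤ) (hq : IsPartitionSeq k q) :
    schur k q 1 n = (J k n q).det := by
  let p : ℕ → ℕ := fun i => if i < k then (q i).toNat else 0
  have hpq : ∀ i, i < k → ((p i : ℕ) : ℤ) = q i := fun i hi => by
    have := hq.2 i hi
    simp only [p, hi, if_true]; omega
  have h0 : ∀ i, k ≤ i → p i = 0 := fun i hi => by simp [p, show ¬ i < k by omega]
  have hp : ∀ i, p (i + 1) ≤ p i := fun i => by
    by_cases hi : i + 1 < k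
    · have h1 := hpq i (by omega)
      have h2 := hpq (i + 1) hi
      have h3 := hq.1 i hi
      omega
    · rw [h0 (i + 1) (by omega)]; omega
  have hlt : ∀ i j : ℕ, j < p i ↔ i < k ∧ (j : ℤ) < q i := fun i j => by
    by_cases hi : i < k
    · rw [← hpq i hi]; simp [hi]
    · rw [h0 i (by omega)]; simp [hi]
  have hJ : J k n q = J k n (fun i => p i) := by
    ext1 i j
    simp only [J, Matrix.of_apply, hpq i i.2]
  rw [hJ, ← jt k n p hp h0, schur, if_pos hq]
  have hset : ((tabs p n : Finset _) : Set (ℕ → ℕ → ℕ)) = {e | Tab p n e} := by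
    ext e
    simp [mem_tabs k n p hp h0]
  rw [← finsum_mem_coe_finset, hset, ← finsum_mem_univ]
  refine finsum_mem_eq_of_bijOn (fun T => T.entry) ⟨?_, ?_, ?_⟩ ?_
  · intro T _
    constructor
    · intro i j hj
      exact T.zero_outside i j (by rw [← hlt]; omega)
    · intro i j hj
      rw [hlt] at hj
      exact T.lower i j hj.1 hj.2
    · intro i j hj
      rw [hlt] at hj
      exact T.upper i j hj.1 hj.2
    · intro i j₁ j₂ h12 hj
      rw [hlt] at hj
      exact T.row_weak i _ _ hj.1 h12 hj.2
    · intro i₁ i₂ j h12 hj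
      rw [hlt] at hj
      exact T.col_strict _ _ j h12 hj.1 hj.2
  · rintro ⟨e, _, _, _, _, _⟩ _ ⟨e', _, _, _, _, _⟩ _ hee
    simp only at hee
    subst hee
    rfl
  · intro e he
    replace he : Tab p n e := he
    refine ⟨⟨e, ?_, ?_, ?_, ?_, ?_⟩, trivial, rfl⟩
    · intro i j hj
      rw [← hlt] at hj
      exact he.out i j (by omega)
    · intro i j hi hj
      exact he.lo i j ((hlt i j).2 ⟨hi, hj⟩)
    · intro i j hi hj
      exact he.up i j ((hlt i j).2 ⟨hi, hj⟩)
    · intro i j₁ j₂ hi h12 hj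
      exact he.row i _ _ h12 ((hlt i _).2 ⟨hi, hj⟩)
    · intro i₁ i₂ j h12 hi hj
      exact he.col _ _ j h12 ((hlt _ j).2 ⟨hi, hj⟩)
  · intro T _
    simp only [SSYT.weight, w]
    apply Finset.prod_congr rfl
    intro i hi
    rw [mem_range] at hi
    rw [show p i = (q i).toNat by simp [p, hi]]

lemma pluecker {m : ℕ} {R : Type*} [CommRing R] (A : Matrix (Fin (m + 1)) (Fin (m + 1)) R)
    (B : Matrix (Fin m) (Fin (m + 1)) R)
    (C : Fin (m + 1) → Matrix (Fin (m + 1)) (Fin (m + 1)) R)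
    (hC : ∀ i j, C i i j = A i j) (hC' : ∀ i r j, C i (i.succAbove r) j = B r j) :
    A.det * (B.submatrix id Fin.succ).det =
      ∑ i, (C i).det * (A.submatrix i.succAbove Fin.succ).det := by
  have h1 : ∀ j, ∑ i, A.adjugate 0 i * A i j = if j = 0 then A.det else 0 := by
    intro j
    have := congrFun (congrFun (Matrix.adjugate_mul A) 0) j
    rw [Matrix.mul_apply] at this
    rw [this, Matrix.smul_apply, Matrix.one_apply]
    by_cases hj : j = 0
    · subst hj; simp
    · simp [hj, Ne.symm hj]
  have h2 : ∀ i, A.adjugate 0 i = (-1) ^ (i : ℕ) * (A.submatrix i.succAbove Fin.succ).det := by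
    intro i
    rw [Matrix.adjugate_fin_succ_eq_det_submatrix]
    simp
  have h3 : ∀ i, (C i).det = ∑ j : Fin (m + 1), (-1) ^ (i : ℕ) * (-1) ^ (j : ℕ) * A i j *
      (B.submatrix id j.succAbove).det := by
    intro i
    rw [Matrix.det_succ_row (C i) i]
    apply Finset.sum_congr rfl
    intro j _
    rw [hC, pow_add]
    congr 2
    ext1 r c
    simp [hC']
  calc A.det * (B.submatrix id Fin.succ).det
      = ∑ j : Fin (m + 1), (-1) ^ (j : ℕ) * (B.submatrix id j.succAbove).det *
          ∑ i, A.adjugate 0 i * A i j := by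
        simp_rw [h1]
        simp [mul_comm]
    _ = _ := by
        simp_rw [Finset.mul_sum, h3, Finset.sum_mul]
        rw [Finset.sum_comm]
        apply Finset.sum_congr rfl
        intro i _
        apply Finset.sum_congr rfl
        intro j _
        rw [h2]
        ring

end JTrudi

/-- let `λ` (with `k` parts) and `μ` (with `k-1` parts) be interlacing
partitions, i.e. `λ_i ≥ μ_i ≥ λ_{i+1}`.  With `λ^i`, `μ^i` defined by
`λ^i_j = μ_j - 1` for `j < i`, `λ^i_i = λ_i`, `λ^i_j = μ_{j-1}` for `j > i`, and
`μ^i_j = λ_j + 1` for `j < i`, `μ^i_j = λ_{j+1}` for `j ≥ i`, one has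
`s^{[n]}_λ · s^{[n]}_μ = Σ_{i=1}^{k} s^{[n]}_{λ^i} · s^{[n]}_{μ^i}`
(with `s^{[n]}_α = 0` when `α` is not a partition, built into `schur`). -/
theorem stmt_18 (k n : ℕ) (hk : 1 ≤ k) (hn : 1 ≤ n) (lam mu : ℕ → ℤ)
    (hlam : ∀ i, i + 1 < k → lam (i + 1) ≤ lam i) (hlampos : ∀ i, i < k → 0 ≤ lam i)
    (hmu : ∀ i, i + 1 < k - 1 → mu (i + 1) ≤ mu i) (hmupos : ∀ i, i < k - 1 → 0 ≤ mu i)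
    (hinter : ∀ i, i < k - 1 → mu i ≤ lam i ∧ lam (i + 1) ≤ mu i) :
    schur k lam 1 n * schur (k - 1) mu 1 n =
      ∑ i ∈ Finset.range k,
        schur k
            (fun j => if j < i then mu j - 1 else if j = i then lam i else mu (j - 1)) 1 n *
          schur (k - 1) (fun j => if j < i then lam j + 1 else lam (j + 1)) 1 n := by
  classical
  obtain ⟨m, rfl⟩ : ∃ m, k = m + 1 := ⟨k - 1, by omega⟩
  simp only [Nat.add_sub_cancel] at *
  rw [JTrudi.schur_eq _ _ _ ⟨hlam, hlampos⟩, JTrudi.schur_eq _ _ _ ⟨hmu, hmupos⟩,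
    Finset.sum_range]
  have hP := JTrudi.pluecker (JTrudi.J (m + 1) n lam)
    (Matrix.of fun (i : Fin m) (j : Fin (m + 1)) =>
      JTrudi.h n (mu i - 1 - (i : ℕ) + (j : ℕ)))
    (fun i => JTrudi.J (m + 1) n
      (fun j => if j < (i : ℕ) then mu j - 1 else if j = i then lam i else mu (j - 1)))
    (by intro i j; simp [JTrudi.J])
    (by
      intro i r j
      simp only [JTrudi.J, Matrix.of_apply]
      congr 1
      by_cases hri : (r : ℕ) < i
      · rw [Fin.succAbove_of_castSucc_lt _ _ (by simpa [Fin.lt_def] using hri)]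
        simp [hri]
      · rw [Fin.succAbove_of_le_castSucc _ _ (by simpa [Fin.le_def] using hri)]
        simp only [Fin.val_succ, show ¬ ((r : ℕ) + 1 < i) by omega,
          show ¬ ((r : ℕ) + 1 = i) by omega, if_false, Nat.add_sub_cancel]
        push_cast
        ring)
  have hmuJ : JTrudi.J m n mu = (Matrix.of fun (i : Fin m) (j : Fin (m + 1)) =>
      JTrudi.h n (mu i - 1 - (i : ℕ) + (j : ℕ))).submatrix id Fin.succ := by
    ext1 i j
    simp only [JTrudi.J, Matrix.of_apply, Matrix.submatrix_apply, id, Fin.val_succ]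
    congr 1
    push_cast
    ring
  rw [hmuJ, hP]
  apply Finset.sum_congr rfl
  intro i _
  have hi := i.2
  congr 1
  · by_cases hc : 0 < (i : ℕ) ∧ mu (i - 1) = lam i
    · rw [schur, if_neg]
      · refine Matrix.det_zero_of_row_eq (i := ⟨(i : ℕ) - 1, by omega⟩) (j := i)
          (by rw [Ne, Fin.ext_iff]; simp only; omega) ?_
        funext j
        simp only [JTrudi.J, Matrix.of_apply, show (i : ℕ) - 1 < i by omega, if_true,
          lt_irrefl, if_false, hc.2]
        congr 1
        omega
      · rintro ⟨h1, -⟩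
        have := h1 (i - 1) (by omega)
        simp only [show (i : ℕ) - 1 + 1 = i by omega, show (i : ℕ) - 1 < i by omega, if_true,
          lt_irrefl, if_false, hc.2] at this
        omega
    · rw [JTrudi.schur_eq]
      have hA : 0 < (i : ℕ) → lam i + 1 ≤ mu (i - 1) := by
        intro h0
        have h1 := (hinter (i - 1) (by omega)).2
        rw [show (i : ℕ) - 1 + 1 = i by omega] at h1
        have : mu (i - 1) ≠ lam i := fun h2 => hc ⟨h0, h2⟩
        omega
      constructor
      · intro j hj
        rcases lt_trichotomy (j + 1) (i : ℕ) with h1 | h1 | h1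
        · simp only [h1, show j < (i : ℕ) by omega, if_true]
          have := hmu j (by omega)
          omega
        · have := hA (by omega)
          simp only [h1, show j < (i : ℕ) by omega, if_true, lt_irrefl, if_false]
          rw [show j = (i : ℕ) - 1 by omega]
          omega
        · simp only [show ¬ (j + 1 < (i : ℕ)) by omega, show ¬ (j + 1 = (i : ℕ)) by omega,
            show ¬ (j < (i : ℕ)) by omega, if_false, Nat.add_sub_cancel]
          split_ifs with h2
          · rw [← h2]
            exact (hinter j (by omega)).1
          · have := hmu (j - 1) (by omega)
            rw [show j - 1 + 1 = j by omega] at this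
            exact this
      · intro j hj
        have h3 := hlampos i hi
        simp only
        split_ifs with h1 h2
        · have h4 := (hinter j (by omega)).2
          by_cases h5 : j + 1 = (i : ℕ)
          · have := hA (by omega)
            rw [show j = (i : ℕ) - 1 by omega]
            omega
          · have h6 := hA (by omega)
            have h7 : ∀ d, j + d < m → mu (j + d) ≤ mu j := by
              intro d
              induction d with
              | zero => intro; simp
              | succ d ih =>
                intro hd
                have := hmu (j + d) (by omega)
                have := ih (by omega)
                rw [show j + (d + 1) = j + d + 1 by omega]
                omega
            have h8 := h7 ((i : ℕ) - 1 - j) (by omega)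
            rw [show j + ((i : ℕ) - 1 - j) = (i : ℕ) - 1 by omega] at h8
            omega
        · exact h3
        · exact hmupos _ (by omega)
  · rw [JTrudi.schur_eq]
    · congr 1
      ext1 r c
      simp only [JTrudi.J, Matrix.of_apply, Matrix.submatrix_apply]
      congr 1
      by_cases hri : (r : ℕ) < i
      · rw [Fin.succAbove_of_castSucc_lt _ _ (by simpa [Fin.lt_def] using hri)]
        simp only [hri, if_true, Fin.val_castSucc, Fin.val_succ]
        push_cast
        ring
      · rw [Fin.succAbove_of_le_castSucc _ _ (by simpa [Fin.le_def] using hri)]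
        simp only [hri, if_false, Fin.val_succ]
        push_cast
        ring
    · constructor
      · intro j hj
        simp only
        have h1 := hlam j (by omega)
        have h2 := hlam (j + 1) (by omega)
        split_ifs <;> omega
      · intro j hj
        simp only
        have h1 := hlampos j (by omega)
        have h2 := hlampos (j + 1) (by omega)
        split_ifs <;> omega
end
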